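/- arXiv:1912.12913 — 2 statements merged into one kernel-verified Lean document; each statement's English description precedes it below -/
import Mathlib

section
/- Let d ≥ 3, p > 1, and let u be a radial function in Ḣ¹(ℝ^d) ∩ L^{p+1}(ℝ^d). Then for every r > 0, |u(r)| ≤ C(d) r^{-2(d-1)/(p+3)} ‖u‖_{Ḣ¹}^{2/(p+3)} ‖u‖_{L^{p+1}}^{(p+1)/(p+3)}. -/
open MeasureTheory Real

/-- If a power of a differentiable function is integrable near infinity, then the function is
controlled by the integral of the derivative of another power of it. -/
theorem abs_rpow_le_integral_Ioi {g : ℝ → ℝ} (hg : Differentiable ℝ g) {a q r : ℝ}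
    (ha : 1 < a) (hq : 0 < q)
    (hF : IntegrableOn (fun s => |g s| ^ (a - 1) * |deriv g s|) (Set.Ioi r))
    (hgq : IntegrableOn (fun s => |g s| ^ q) (Set.Ioi r)) :
    |g r| ^ a ≤ a * ∫ s in Set.Ioi r, |g s| ^ (a - 1) * |deriv g s| := by
  set K := ∫ s in Set.Ioi r, |g s| ^ (a - 1) * |deriv g s|
  have ha0 : 0 < a := by linarith
  have hderiv (s : ℝ) : HasDerivAt (fun s => |g s| ^ a) (a * |g s| ^ (a - 2) * g s * deriv g s) s :=
    (hasDerivAt_abs_rpow (g s) ha).comp s (hg s).hasDerivAt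
  have hnorm (s : ℝ) : ‖a * |g s| ^ (a - 2) * g s * deriv g s‖ =
      a * (|g s| ^ (a - 1) * |deriv g s|) := by
    rw [norm_mul, norm_mul, norm_mul, Real.norm_eq_abs, Real.norm_eq_abs, Real.norm_eq_abs,
      Real.norm_eq_abs, abs_of_pos ha0, abs_of_nonneg (rpow_nonneg (abs_nonneg _) _)]
    rcases eq_or_ne (g s) 0 with h | h
    · simp [h, zero_rpow (by linarith : a - 1 ≠ 0)]
    · rw [show a - 1 = (a - 2) + 1 by ring, rpow_add_one (abs_ne_zero.2 h)]
      ring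
  have hbound (R : ℝ) (hR : r < R) : |g r| ^ a - a * K ≤ |g R| ^ a := by
    have hmeas : Measurable (fun s => a * |g s| ^ (a - 2) * g s * deriv g s) := by
      have := hg.continuous.measurable
      have := measurable_deriv g
      fun_prop
    have hint : IntegrableOn (fun s => a * |g s| ^ (a - 2) * g s * deriv g s) (Set.Ioi r) :=
      (hF.const_mul a).mono' hmeas.aestronglyMeasurable (.of_forall fun s => (hnorm s).le)
    have hint' : IntervalIntegrable (fun s => a * |g s| ^ (a - 2) * g s * deriv g s) volume r R :=
      (intervalIntegrable_iff_integrableOn_Ioc_of_le hR.le).2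
        (hint.mono_set Set.Ioc_subset_Ioi_self)
    have hFTC := intervalIntegral.integral_eq_sub_of_hasDerivAt (fun s _ => hderiv s) hint'
    have h₁ : ‖∫ s in r..R, a * |g s| ^ (a - 2) * g s * deriv g s‖ ≤ a * K := by
      calc _ ≤ ∫ s in r..R, ‖a * |g s| ^ (a - 2) * g s * deriv g s‖ :=
            intervalIntegral.norm_integral_le_integral_norm hR.le
        _ = ∫ s in Set.Ioc r R, a * (|g s| ^ (a - 1) * |deriv g s|) := by
            simp_rw [hnorm]
            exact intervalIntegral.integral_of_le hR.le
        _ ≤ ∫ s in Set.Ioi r, a * (|g s| ^ (a - 1) * |deriv g s|) :=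
            setIntegral_mono_set (hF.const_mul a) (.of_forall fun s => by
              simp only [Pi.zero_apply]; positivity)
              Set.Ioc_subset_Ioi_self.eventuallyLE
        _ = a * K := integral_const_mul _ _
    rw [hFTC, Real.norm_eq_abs] at h₁
    linarith [neg_abs_le (|g R| ^ a - |g r| ^ a)]
  by_contra! hlt
  set δ := |g r| ^ a - a * K
  have hδ0 : 0 < δ := sub_pos.2 hlt
  have hconst : IntegrableOn (fun _ : ℝ => δ ^ (q / a)) (Set.Ioi r) := by
    refine hgq.mono' aestronglyMeasurable_const ?_
    filter_upwards [ae_restrict_mem measurableSet_Ioi] with s hs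
    rw [Real.norm_eq_abs, abs_of_nonneg (rpow_nonneg hδ0.le _)]
    calc δ ^ (q / a) ≤ (|g s| ^ a) ^ (q / a) :=
          rpow_le_rpow hδ0.le (hbound s hs) (by positivity)
      _ = |g s| ^ q := by
          rw [← rpow_mul (abs_nonneg _), mul_div_cancel₀ _ ha0.ne']
  rw [integrableOn_const_iff] at hconst
  have := (rpow_pos_of_pos hδ0 (q / a)).ne'
  simp [this] at hconst

section Radial

variable {E : Type*} [NormedAddCommGroup E] [NormedSpace ℝ E]

/-- The derivative of the profile of a radial function is bounded by its gradient. -/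
theorem abs_deriv_radial_profile_le {u : E → ℝ} (hu : Differentiable ℝ u)
    (hrad : ∀ x y : E, ‖x‖ = ‖y‖ → u x = u y) {e : E} (he : ‖e‖ = 1) (x : E) :
    |deriv (fun s : ℝ => u (s • e)) ‖x‖| ≤ ‖fderiv ℝ u x‖ := by
  obtain ⟨e', he', hx⟩ : ∃ e' : E, ‖e'‖ = 1 ∧ ‖x‖ • e' = x := by
    rcases eq_or_ne x 0 with rfl | hx
    · exact ⟨e, he, by simp⟩
    · have := norm_ne_zero_iff.2 hx
      exact ⟨‖x‖⁻¹ • x, by rw [norm_smul, norm_inv, norm_norm, inv_mul_cancel₀ this],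
        by rw [smul_smul, mul_inv_cancel₀ this, one_smul]⟩
  have hprofile : (fun s : ℝ => u (s • e)) = fun s : ℝ => u (s • e') := by
    funext s
    exact hrad _ _ (by simp [norm_smul, he, he'])
  have hline : HasDerivAt (fun s : ℝ => s • e') e' ‖x‖ := by
    simpa using (hasDerivAt_id ‖x‖).smul_const e'
  have hd : HasDerivAt (fun s : ℝ => u (s • e')) (fderiv ℝ u x e') ‖x‖ := by
    have hux : HasFDerivAt u (fderiv ℝ u x) (‖x‖ • e') := by
      rw [hx]; exact (hu x).hasFDerivAt
    exact hux.comp_hasDerivAt ‖x‖ hline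
  rw [hprofile, hd.deriv, ← Real.norm_eq_abs]
  simpa [he'] using (fderiv ℝ u x).le_opNorm e'

variable [FiniteDimensional ℝ E] [Nontrivial E] [MeasurableSpace E] [BorelSpace E]
  (μ : Measure E) [μ.IsAddHaarMeasure]

theorem integrableOn_Ioi_of_integrable_fun_norm {F : ℝ → ℝ} (hFm : Measurable F)
    (hF : Integrable (fun x : E => F ‖x‖) μ) {r : ℝ} (hr : 0 < r) :
    IntegrableOn F (Set.Ioi r) := by
  have h := ((integrable_fun_norm_addHaar μ).1 hF).mono_set (Set.Ioi_subset_Ioi hr.le)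
  refine (h.norm.const_mul (r ^ (Module.finrank ℝ E - 1))⁻¹).mono'
    hFm.aestronglyMeasurable ?_
  filter_upwards [ae_restrict_mem measurableSet_Ioi] with s hs
  have hs' : r < s := hs
  rw [norm_smul, norm_pow, Real.norm_of_nonneg (hr.trans hs').le, ← mul_assoc]
  refine le_mul_of_one_le_left (norm_nonneg _) ?_
  rw [inv_mul_eq_div, one_le_div (by positivity)]
  gcongr

theorem integral_Ioi_le_integral_fun_norm {F : ℝ → ℝ} (hFm : Measurable F) (hF0 : ∀ s, 0 ≤ F s)
    (hF : Integrable (fun x : E => F ‖x‖) μ) {r : ℝ} (hr : 0 < r) :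
    (Module.finrank ℝ E * μ.real (Metric.ball 0 1)) * r ^ (Module.finrank ℝ E - 1) *
      ∫ s in Set.Ioi r, F s ≤ ∫ x, F ‖x‖ ∂μ := by
  have h := (integrable_fun_norm_addHaar μ).1 hF
  rw [integral_fun_norm_addHaar μ F, nsmul_eq_mul, smul_eq_mul, mul_assoc, mul_assoc]
  gcongr
  rw [← integral_const_mul]
  calc ∫ s in Set.Ioi r, r ^ (Module.finrank ℝ E - 1) * F s
      ≤ ∫ s in Set.Ioi r, s ^ (Module.finrank ℝ E - 1) • F s := by
        refine setIntegral_mono_on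
          ((integrableOn_Ioi_of_integrable_fun_norm μ hFm hF hr).const_mul _)
          (h.mono_set (Set.Ioi_subset_Ioi hr.le)) measurableSet_Ioi fun s hs => ?_
        have hs' : r < s := hs
        have := hF0 s
        rw [smul_eq_mul]
        gcongr
    _ ≤ _ := by
        refine setIntegral_mono_set h ?_ (Set.Ioi_subset_Ioi hr.le).eventuallyLE
        filter_upwards [ae_restrict_mem measurableSet_Ioi] with s hs
        exact mul_nonneg (pow_nonneg (le_of_lt hs) _) (hF0 s)

/-- Weighted form of the radial estimate, before extracting the root. -/
theorem abs_rpow_le_of_radial {u : E → ℝ} (hu : Differentiable ℝ u)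
    (hrad : ∀ x y : E, ‖x‖ = ‖y‖ → u x = u y) {p : ℝ} (hp : 1 < p)
    (hgrad : Integrable (fun x => ‖fderiv ℝ u x‖ ^ 2) μ)
    (hup : Integrable (fun x => |u x| ^ (p + 1)) μ) {x : E} (hx : 0 < ‖x‖) :
    (Module.finrank ℝ E * μ.real (Metric.ball 0 1)) * ‖x‖ ^ (Module.finrank ℝ E - 1) *
        |u x| ^ ((p + 3) / 2) ≤
      (p + 3) / 2 * ((∫ y, ‖fderiv ℝ u y‖ ^ 2 ∂μ) ^ ((1 : ℝ) / 2) *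
        (∫ y, |u y| ^ (p + 1) ∂μ) ^ ((1 : ℝ) / 2)) := by
  obtain ⟨e, he⟩ := exists_norm_eq E (zero_le_one (α := ℝ))
  set g : ℝ → ℝ := fun s => u (s • e)
  have hgd : Differentiable ℝ g := by fun_prop
  have hgu (y : E) : g ‖y‖ = u y := hrad _ _ (by simp [norm_smul, he])
  set F : ℝ → ℝ := fun s => |g s| ^ ((p + 3) / 2 - 1) * |deriv g s| with hFdef
  have hgm : Measurable g := hgd.continuous.measurable
  have hFm : Measurable F := by
    have := measurable_deriv g
    fun_prop
  have hF0 (s : ℝ) : 0 ≤ F s := by positivity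
  have hFle (y : E) : F ‖y‖ ≤ ‖fderiv ℝ u y‖ * |u y| ^ ((p + 1) / 2) := by
    have := abs_deriv_radial_profile_le hu hrad he y
    simp only [hFdef]
    rw [hgu, mul_comm, show (p + 3) / 2 - 1 = (p + 1) / 2 by ring]
    gcongr
  have hsq (y : E) : (|u y| ^ ((p + 1) / 2)) ^ 2 = |u y| ^ (p + 1) := by
    rw [← rpow_mul_natCast (abs_nonneg _)]
    norm_num
  have hum : Measurable u := hu.continuous.measurable
  have hgrad2 : MemLp (fun y => ‖fderiv ℝ u y‖) 2 μ :=
    (memLp_two_iff_integrable_sq (measurable_fderiv ℝ u).norm.aestronglyMeasurable).2 hgrad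
  have hu2 : MemLp (fun y => |u y| ^ ((p + 1) / 2)) 2 μ := by
    refine (memLp_two_iff_integrable_sq
      (hum.norm.pow_const _).aestronglyMeasurable).2 ?_
    simpa only [Real.norm_eq_abs, hsq] using hup
  have hprod : Integrable (fun y => ‖fderiv ℝ u y‖ * |u y| ^ ((p + 1) / 2)) μ :=
    hgrad2.integrable_mul hu2
  have hFint : Integrable (fun y : E => F ‖y‖) μ :=
    hprod.mono' (hFm.comp measurable_norm).aestronglyMeasurable (.of_forall fun y => by
      rw [Real.norm_of_nonneg (hF0 _)]; exact hFle y)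
  have hholder := integral_mul_le_Lp_mul_Lq_of_nonneg (μ := μ) Real.HolderConjugate.two_two
    (f := fun y => ‖fderiv ℝ u y‖) (g := fun y => |u y| ^ ((p + 1) / 2))
    (.of_forall fun y => norm_nonneg _)
    (.of_forall fun y => by simp only [Pi.zero_apply]; positivity)
    (by simpa using hgrad2) (by simpa using hu2)
  simp only [rpow_two, hsq] at hholder
  have hone := abs_rpow_le_integral_Ioi hgd (a := (p + 3) / 2) (q := p + 1) (r := ‖x‖)
    (by linarith) (by linarith) (integrableOn_Ioi_of_integrable_fun_norm μ hFm hFint hx)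
    (integrableOn_Ioi_of_integrable_fun_norm μ (by fun_prop) (by simpa only [hgu] using hup) hx)
  rw [hgu] at hone
  have hradial := integral_Ioi_le_integral_fun_norm μ hFm hF0 hFint hx
  have hmono := integral_mono hFint hprod hFle
  calc _ ≤ (Module.finrank ℝ E * μ.real (Metric.ball 0 1)) * ‖x‖ ^ (Module.finrank ℝ E - 1) *
        ((p + 3) / 2 * ∫ s in Set.Ioi ‖x‖, F s) := by gcongr
    _ = (p + 3) / 2 * ((Module.finrank ℝ E * μ.real (Metric.ball 0 1)) *
        ‖x‖ ^ (Module.finrank ℝ E - 1) * ∫ s in Set.Ioi ‖x‖, F s) := by ring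
    _ ≤ _ := by
      have : 0 ≤ (p + 3) / 2 := by linarith
      exact mul_le_mul_of_nonneg_left (hradial.trans (hmono.trans hholder)) this

end Radial

/-- Extracting the root with a constant independent of the exponent. -/
theorem le_of_mul_rpow_le {a c t M v : ℝ} (ha : 1 ≤ a) (hc : 0 < c) (ht : 0 < t) (hM : 0 ≤ M)
    (hv : 0 ≤ v) (h : c * t * v ^ a ≤ a * M) :
    v ≤ 2 * max 1 c⁻¹ * t ^ (-a⁻¹) * M ^ a⁻¹ := by
  have ha0 : 0 < a := by linarith
  have h₁ : v ^ a ≤ a * c⁻¹ * t⁻¹ * M := by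
    rw [← le_div_iff₀' (by positivity)] at h
    refine h.trans_eq ?_
    field_simp
  have h₂ : a ^ a⁻¹ ≤ 2 := by
    rw [rpow_inv_le_iff_of_pos ha0.le zero_le_two ha0]
    have := one_add_mul_self_le_rpow_one_add (s := 1) (by norm_num) ha
    norm_num at this
    linarith
  have h₃ : c⁻¹ ^ a⁻¹ ≤ max 1 c⁻¹ :=
    calc c⁻¹ ^ a⁻¹ ≤ (max 1 c⁻¹) ^ a⁻¹ := by gcongr; exact le_max_right _ _
      _ ≤ (max 1 c⁻¹) ^ (1 : ℝ) :=
        rpow_le_rpow_of_exponent_le (le_max_left _ _) (inv_le_one_of_one_le₀ ha)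
      _ = _ := rpow_one _
  calc v = (v ^ a) ^ a⁻¹ := (rpow_rpow_inv hv ha0.ne').symm
    _ ≤ (a * c⁻¹ * t⁻¹ * M) ^ a⁻¹ := by gcongr
    _ = a ^ a⁻¹ * c⁻¹ ^ a⁻¹ * t ^ (-a⁻¹) * M ^ a⁻¹ := by
      rw [mul_rpow (by positivity) hM, mul_rpow (by positivity) (by positivity),
        mul_rpow (by positivity) (by positivity), rpow_neg ht.le, inv_rpow ht.le]
    _ ≤ _ := by gcongr

/-- Pointwise estimate for radial `Ḣ¹ ∩ L^{p+1}(ℝ^d)` functions, `d ≥ 3`, `p > 1`: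
`|u(r)| ≤ C(d) r^{-2(d-1)/(p+3)} ‖u‖_{Ḣ¹}^{2/(p+3)} ‖u‖_{L^{p+1}}^{(p+1)/(p+3)}`. -/
theorem pointwise_estimate_radial_H1_Lp (d : ℕ) (hd : 3 ≤ d) :
    ∃ C : ℝ, 0 < C ∧
      ∀ (p : ℝ), 1 < p →
      ∀ (u : EuclideanSpace ℝ (Fin d) → ℝ),
        Differentiable ℝ u →
        (∀ x y : EuclideanSpace ℝ (Fin d), ‖x‖ = ‖y‖ → u x = u y) →
        Integrable (fun x => ‖fderiv ℝ u x‖ ^ 2) →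
        Integrable (fun x => |u x| ^ (p + 1)) →
        ∀ r : ℝ, 0 < r → ∀ x : EuclideanSpace ℝ (Fin d), ‖x‖ = r →
          |u x| ≤ C * r ^ (-(2 * ((d : ℝ) - 1) / (p + 3))) *
            ((∫ y, ‖fderiv ℝ u y‖ ^ 2) ^ ((1 : ℝ) / 2)) ^ (2 / (p + 3)) *
            ((∫ y, |u y| ^ (p + 1)) ^ (1 / (p + 1))) ^ ((p + 1) / (p + 3)) := by
  have : Nonempty (Fin d) := ⟨⟨0, by omega⟩⟩
  set c : ℝ := d * (volume : Measure (EuclideanSpace ℝ (Fin d))).real (Metric.ball 0 1)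
  have hc0 : 0 < c := by
    have : 0 < (volume : Measure (EuclideanSpace ℝ (Fin d))).real (Metric.ball 0 1) :=
      ENNReal.toReal_pos (Metric.measure_ball_pos _ _ one_pos).ne' measure_ball_lt_top.ne
    have : (0 : ℝ) < d := by exact_mod_cast (by omega : 0 < d)
    positivity
  refine ⟨2 * max 1 c⁻¹, by positivity, ?_⟩
  rintro p hp u hu hrad hgrad hup r hr x rfl
  have hA : 0 ≤ ∫ y, ‖fderiv ℝ u y‖ ^ 2 := integral_nonneg fun y => by positivity
  have hB : 0 ≤ ∫ y, |u y| ^ (p + 1) := integral_nonneg fun y => by positivity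
  have h := abs_rpow_le_of_radial volume hu hrad hp hgrad hup hr
  rw [finrank_euclideanSpace_fin] at h
  refine (le_of_mul_rpow_le (by linarith) hc0 (by positivity) (by positivity) (abs_nonneg _)
    h).trans_eq ?_
  have hp3 : p + 3 ≠ 0 := by linarith
  have hp1 : p + 1 ≠ 0 := by linarith
  rw [mul_rpow (by positivity) (by positivity), ← mul_assoc, ← rpow_natCast_mul hr.le,
    ← rpow_mul hB, ← rpow_mul hB, Nat.cast_sub (by omega : 1 ≤ d), Nat.cast_one, inv_div]
  rw [show (1 : ℝ) / 2 * (2 / (p + 3)) = 1 / (p + 1) * ((p + 1) / (p + 3)) by field_simp,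
    show ((d : ℝ) - 1) * -(2 / (p + 3)) = -(2 * ((d : ℝ) - 1) / (p + 3)) by ring]
end

section
/- Let d ≥ 3 and let u be a finite-energy solution of the free wave equation ∂_t²u - Δu = 0 on ℝ^d with initial data in Ḣ¹ × L²(ℝ^d). Then lim_{t→+∞} ∫_{ℝ^d} |u(x,t)|²/|x|² dx = 0. -/
open MeasureTheory Real Filter

namespace FreeWave

/-! ### Partial derivatives, the weight `(1 + |x|²)^(-1/2)` and a radial cutoff -/

variable {d : ℕ}

/-- `f` has partial derivative `f'` at `x` in the `i`-th coordinate direction. -/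
abbrev HasPartial (i : Fin d) (f : EuclideanSpace ℝ (Fin d) → ℝ) (f' : ℝ)
    (x : EuclideanSpace ℝ (Fin d)) : Prop :=
  HasDerivAt (fun s : ℝ => f (x + s • EuclideanSpace.single i (1 : ℝ))) f' 0

theorem hasPartial_coord (i j : Fin d) (x : EuclideanSpace ℝ (Fin d)) :
    HasPartial i (fun y => y j) (if j = i then 1 else 0) x := by
  have h : HasDerivAt (fun s : ℝ => x j + s * (if j = i then (1 : ℝ) else 0))
      (1 * (if j = i then (1 : ℝ) else 0)) 0 :=
    ((hasDerivAt_id (0 : ℝ)).mul_const _).const_add _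
  simpa [HasPartial, Pi.single_apply] using h

theorem hasPartial_norm_sq (i : Fin d) (x : EuclideanSpace ℝ (Fin d)) :
    HasPartial i (fun y => ‖y‖ ^ 2) (2 * x i) x := by
  have h : HasDerivAt (fun s : ℝ => ∑ j, (x + s • EuclideanSpace.single i (1 : ℝ)) j ^ 2)
      (∑ j, (2 : ℕ) * (x + (0 : ℝ) • EuclideanSpace.single i (1 : ℝ)) j ^ (2 - 1)
        * (if j = i then 1 else 0)) 0 :=
    HasDerivAt.fun_sum fun j _ => (hasPartial_coord i j x).fun_pow 2
  simpa [HasPartial, EuclideanSpace.real_norm_sq_eq] using h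

/-- The weight `(1 + |x|²)^(-1/2)`. -/
noncomputable def weight (x : EuclideanSpace ℝ (Fin d)) : ℝ := (√(1 + ‖x‖ ^ 2))⁻¹

theorem weight_pos (x : EuclideanSpace ℝ (Fin d)) : 0 < weight x := by
  unfold weight; positivity

theorem weight_sq (x : EuclideanSpace ℝ (Fin d)) : weight x ^ 2 = (1 + ‖x‖ ^ 2)⁻¹ := by
  unfold weight
  rw [inv_pow, Real.sq_sqrt (by positivity)]

theorem weight_sq_mul (x : EuclideanSpace ℝ (Fin d)) : weight x ^ 2 * (1 + ‖x‖ ^ 2) = 1 := by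
  rw [weight_sq]
  exact inv_mul_cancel₀ (by positivity)

theorem weight_le_one (x : EuclideanSpace ℝ (Fin d)) : weight x ≤ 1 := by
  have h1 := weight_pos x
  have h2 := weight_sq_mul x
  by_contra! h
  nlinarith [sq_nonneg (weight x * ‖x‖)]

theorem abs_coord_le (x : EuclideanSpace ℝ (Fin d)) (i : Fin d) : |x i| ≤ ‖x‖ := by
  simpa using PiLp.norm_apply_le x i

theorem weight_mul_abs_coord_le (x : EuclideanSpace ℝ (Fin d)) (i : Fin d) :
    weight x * |x i| ≤ 1 := by
  have h1 := weight_pos x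
  have h2 := weight_sq_mul x
  have h4 : weight x * |x i| ≤ weight x * ‖x‖ :=
    mul_le_mul_of_nonneg_left (abs_coord_le x i) h1.le
  have h5 : (weight x * ‖x‖) ^ 2 ≤ 1 ^ 2 := by nlinarith
  exact h4.trans ((le_abs_self _).trans (abs_le_of_sq_le_sq h5 zero_le_one))

@[fun_prop]
theorem continuous_weight : Continuous (weight : EuclideanSpace ℝ (Fin d) → ℝ) := by
  unfold weight
  exact Continuous.inv₀ (by fun_prop) fun x => by positivity

theorem hasPartial_weight (i : Fin d) (x : EuclideanSpace ℝ (Fin d)) :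
    HasPartial i weight (-(x i) * weight x ^ 3) x := by
  have h1 : HasDerivAt (fun s : ℝ => 1 + ‖x + s • EuclideanSpace.single i (1 : ℝ)‖ ^ 2)
      (2 * x i) 0 := (hasPartial_norm_sq i x).const_add 1
  have h2 := (h1.sqrt (by positivity)).fun_inv (by positivity)
  refine h2.congr_deriv ?_
  have h3 : √(1 + ‖x‖ ^ 2) ≠ 0 := by positivity
  simp only [zero_smul, add_zero, weight]
  field_simp

theorem hasPartial_weight_pow (i : Fin d) (x : EuclideanSpace ℝ (Fin d)) (n : ℕ) :
    HasPartial i (fun y => weight y ^ n) (-(n * x i * weight x ^ (n + 2))) x := by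
  refine ((hasPartial_weight i x).fun_pow n).congr_deriv ?_
  rcases n with _ | n
  · simp
  · simp
    ring

/-- The `C¹` cutoff `max(0, 1 - |x|²/R²)²`. -/
noncomputable def cutoff (R : ℝ) (x : EuclideanSpace ℝ (Fin d)) : ℝ :=
  (max 0 (1 - ‖x‖ ^ 2 / R ^ 2)) ^ 2

/-- The partial derivatives of the cutoff. -/
noncomputable def cutoffPartial (R : ℝ) (i : Fin d) (x : EuclideanSpace ℝ (Fin d)) : ℝ :=
  -(4 * x i / R ^ 2 * max 0 (1 - ‖x‖ ^ 2 / R ^ 2))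

@[fun_prop]
theorem continuous_cutoff (R : ℝ) :
    Continuous (cutoff R : EuclideanSpace ℝ (Fin d) → ℝ) := by
  unfold cutoff; fun_prop

@[fun_prop]
theorem continuous_cutoffPartial (R : ℝ) (i : Fin d) :
    Continuous (cutoffPartial R i : EuclideanSpace ℝ (Fin d) → ℝ) := by
  unfold cutoffPartial; fun_prop

theorem hasDerivAt_max_zero_sq (y : ℝ) :
    HasDerivAt (fun z : ℝ => (max 0 z) ^ 2) (2 * max 0 y) y := by
  rcases lt_trichotomy y 0 with h | h | h
  · rw [max_eq_left h.le, mul_zero]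
    refine (hasDerivAt_const y (0 : ℝ)).congr_of_eventuallyEq ?_
    filter_upwards [eventually_lt_nhds h] with z hz
    simp [max_eq_left hz.le]
  · subst h
    rw [hasDerivAt_iff_isLittleO]
    simp only [max_self, sub_zero, mul_zero, smul_zero, ne_eq, OfNat.ofNat_ne_zero,
      not_false_eq_true, zero_pow]
    have h1 : (fun z : ℝ => (max 0 z) ^ 2) =O[nhds 0] fun z : ℝ => z ^ 2 := by
      refine Asymptotics.isBigO_of_le _ fun z => ?_
      simp only [norm_pow, Real.norm_eq_abs]
      refine pow_le_pow_left₀ (abs_nonneg _) ?_ 2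
      rw [abs_of_nonneg (le_max_left _ _)]
      exact max_le (abs_nonneg _) (le_abs_self _)
    exact h1.trans_isLittleO (Asymptotics.isLittleO_pow_id one_lt_two)
  · rw [max_eq_right h.le]
    refine HasDerivAt.congr_of_eventuallyEq (f := fun z : ℝ => z ^ 2) ?_ ?_
    · simpa using hasDerivAt_pow 2 y
    · filter_upwards [eventually_gt_nhds h] with z hz
      simp [max_eq_right hz.le]

theorem hasPartial_cutoff (R : ℝ) (i : Fin d) (x : EuclideanSpace ℝ (Fin d)) :
    HasPartial i (cutoff R) (cutoffPartial R i x) x := by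
  have h1 : HasDerivAt (fun s : ℝ => 1 - ‖x + s • EuclideanSpace.single i (1 : ℝ)‖ ^ 2 / R ^ 2)
      (-(2 * x i / R ^ 2)) 0 := ((hasPartial_norm_sq i x).div_const _).const_sub 1
  have h2 := HasDerivAt.comp (0 : ℝ) (hasDerivAt_max_zero_sq _) h1
  refine h2.congr_deriv ?_
  simp only [zero_smul, add_zero, cutoffPartial]
  ring

theorem cutoff_nonneg (R : ℝ) (x : EuclideanSpace ℝ (Fin d)) : 0 ≤ cutoff R x := sq_nonneg _

theorem cutoff_le_one (R : ℝ) (x : EuclideanSpace ℝ (Fin d)) : cutoff R x ≤ 1 := by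
  unfold cutoff
  refine pow_le_one₀ (le_max_left _ _) (max_le zero_le_one ?_)
  have : 0 ≤ ‖x‖ ^ 2 / R ^ 2 := by positivity
  linarith

theorem one_sub_norm_sq_div_nonpos {R : ℝ} (hR : 0 < R) {x : EuclideanSpace ℝ (Fin d)}
    (hx : R ≤ ‖x‖) : 1 - ‖x‖ ^ 2 / R ^ 2 ≤ 0 := by
  have : 1 ≤ ‖x‖ ^ 2 / R ^ 2 := by
    rw [one_le_div (by positivity)]
    exact pow_le_pow_left₀ hR.le hx 2
  linarith

theorem cutoff_eq_zero {R : ℝ} (hR : 0 < R) {x : EuclideanSpace ℝ (Fin d)} (hx : R ≤ ‖x‖) :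
    cutoff R x = 0 := by
  simp [cutoff, max_eq_left (one_sub_norm_sq_div_nonpos hR hx)]

theorem cutoffPartial_eq_zero {R : ℝ} (hR : 0 < R) (i : Fin d) {x : EuclideanSpace ℝ (Fin d)}
    (hx : R ≤ ‖x‖) : cutoffPartial R i x = 0 := by
  simp [cutoffPartial, max_eq_left (one_sub_norm_sq_div_nonpos hR hx)]

theorem hasCompactSupport_cutoff {R : ℝ} (hR : 0 < R) :
    HasCompactSupport (cutoff R : EuclideanSpace ℝ (Fin d) → ℝ) :=
  HasCompactSupport.intro (isCompact_closedBall 0 R) fun x hx =>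
    cutoff_eq_zero hR (by simpa using (not_le.1 (by simpa using hx)).le)

theorem hasCompactSupport_cutoffPartial {R : ℝ} (hR : 0 < R) (i : Fin d) :
    HasCompactSupport (cutoffPartial R i : EuclideanSpace ℝ (Fin d) → ℝ) :=
  HasCompactSupport.intro (isCompact_closedBall 0 R) fun x hx =>
    cutoffPartial_eq_zero hR i (by simpa using (not_le.1 (by simpa using hx)).le)

theorem abs_cutoffPartial_le_norm {R : ℝ} (i : Fin d) (x : EuclideanSpace ℝ (Fin d)) :
    |cutoffPartial R i x| ≤ 4 * ‖x‖ / R ^ 2 := by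
  have h0 : |max 0 (1 - ‖x‖ ^ 2 / R ^ 2)| = max 0 (1 - ‖x‖ ^ 2 / R ^ 2) :=
    abs_of_nonneg (le_max_left _ _)
  rw [cutoffPartial, abs_neg, abs_mul, abs_div, abs_mul, h0, abs_of_nonneg (sq_nonneg R),
    abs_of_pos (four_pos : (0 : ℝ) < 4)]
  have h1 : max 0 (1 - ‖x‖ ^ 2 / R ^ 2) ≤ 1 := by
    have : 0 ≤ ‖x‖ ^ 2 / R ^ 2 := by positivity
    exact max_le zero_le_one (by linarith)
  calc 4 * |x i| / R ^ 2 * max 0 (1 - ‖x‖ ^ 2 / R ^ 2) ≤ 4 * |x i| / R ^ 2 * 1 := by gcongr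
    _ ≤ 4 * ‖x‖ / R ^ 2 := by
      rw [mul_one]
      gcongr
      exact abs_coord_le x i

theorem abs_cutoffPartial_le {R : ℝ} (hR : 0 < R) (i : Fin d) (x : EuclideanSpace ℝ (Fin d)) :
    |cutoffPartial R i x| ≤ 4 / R := by
  rcases le_total R ‖x‖ with h | h
  · rw [cutoffPartial_eq_zero hR i h, abs_zero]
    positivity
  · refine (abs_cutoffPartial_le_norm i x).trans ?_
    calc 4 * ‖x‖ / R ^ 2 ≤ 4 * R / R ^ 2 := by gcongr
      _ = 4 / R := by field_simp

theorem abs_cutoffPartial_mul_norm_le {R : ℝ} (hR : 0 < R) (i : Fin d)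
    (x : EuclideanSpace ℝ (Fin d)) : |cutoffPartial R i x| * ‖x‖ ≤ 4 := by
  rcases le_total R ‖x‖ with h | h
  · rw [cutoffPartial_eq_zero hR i h, abs_zero]
    norm_num
  · calc |cutoffPartial R i x| * ‖x‖ ≤ 4 / R * R := by
          gcongr
          exact abs_cutoffPartial_le hR i x
      _ = 4 := by field_simp

theorem tendsto_cutoff (x : EuclideanSpace ℝ (Fin d)) :
    Tendsto (fun R : ℝ => cutoff R x) atTop (nhds 1) := by
  have h1 : Tendsto (fun R : ℝ => ‖x‖ ^ 2 / R ^ 2) atTop (nhds 0) :=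
    Tendsto.const_div_atTop (tendsto_pow_atTop two_ne_zero) _
  have h2 := ((tendsto_const_nhds (x := (0 : ℝ))).max
    ((tendsto_const_nhds (x := (1 : ℝ))).sub h1)).pow 2
  simpa [cutoff] using h2

theorem tendsto_cutoffPartial (i : Fin d) (x : EuclideanSpace ℝ (Fin d)) :
    Tendsto (fun R : ℝ => cutoffPartial R i x) atTop (nhds 0) := by
  refine squeeze_zero_norm (fun R => abs_cutoffPartial_le_norm i x) ?_
  exact Tendsto.const_div_atTop (tendsto_pow_atTop two_ne_zero) _

theorem integrable_cutoff_mul {R : ℝ} (hR : 0 < R) {f : EuclideanSpace ℝ (Fin d) → ℝ}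
    (hf : Continuous f) : Integrable fun x => cutoff R x * f x :=
  ((continuous_cutoff R).mul hf).integrable_of_hasCompactSupport
    (hasCompactSupport_cutoff hR).mul_right

theorem integrable_cutoffPartial_mul {R : ℝ} (hR : 0 < R) (i : Fin d)
    {f : EuclideanSpace ℝ (Fin d) → ℝ} (hf : Continuous f) :
    Integrable fun x => cutoffPartial R i x * f x :=
  ((continuous_cutoffPartial R i).mul hf).integrable_of_hasCompactSupport
    (hasCompactSupport_cutoffPartial hR i).mul_right

/-- Integration by parts against the cutoff. -/
theorem integral_cutoff_mul_partial {R : ℝ} (hR : 0 < R) (i : Fin d)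
    {f f' : EuclideanSpace ℝ (Fin d) → ℝ} (hf : Continuous f) (hf' : Continuous f')
    (h : ∀ x, HasPartial i f (f' x) x) :
    ∫ x, cutoff R x * f' x = -∫ x, cutoffPartial R i x * f x :=
  integral_bilinear_hasLineDerivAt_right_eq_neg_left_of_integrable
    (B := ContinuousLinearMap.mul ℝ ℝ) (v := EuclideanSpace.single i (1 : ℝ))
    (integrable_cutoffPartial_mul hR i hf) (integrable_cutoff_mul hR hf')
    (integrable_cutoff_mul hR hf) (fun x _ => hasPartial_cutoff R i x) (fun x _ => h x)

/-- Differentiation under the integral against the cutoff. -/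
theorem hasDerivAt_integral_cutoff_mul {R : ℝ} (hR : 0 < R)
    {e e' : EuclideanSpace ℝ (Fin d) → ℝ → ℝ}
    (he : Continuous (Function.uncurry e)) (he' : Continuous (Function.uncurry e'))
    (h : ∀ x t, HasDerivAt (e x) (e' x t) t) (t : ℝ) :
    HasDerivAt (fun s => ∫ x, cutoff R x * e x s) (∫ x, cutoff R x * e' x t) t := by
  obtain ⟨C, hC⟩ := ((isCompact_closedBall (0 : EuclideanSpace ℝ (Fin d)) R).prod
    (isCompact_Icc (a := t - 1) (b := t + 1))).exists_bound_of_continuousOn he'.continuousOn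
  have hcont : ∀ s, Continuous fun x => e x s := fun s => by fun_prop
  have hcont' : ∀ s, Continuous fun x => e' x s := fun s => by fun_prop
  refine (hasDerivAt_integral_of_dominated_loc_of_deriv_le
    (F := fun s x => cutoff R x * e x s) (F' := fun s x => cutoff R x * e' x s)
    (bound := fun x => cutoff R x * C) (s := Set.Icc (t - 1) (t + 1))
    (Icc_mem_nhds (by linarith) (by linarith))
    (Eventually.of_forall fun s => (integrable_cutoff_mul hR (hcont s)).aestronglyMeasurable)
    (integrable_cutoff_mul hR (hcont t))
    (integrable_cutoff_mul hR (hcont' t)).aestronglyMeasurable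
    (Eventually.of_forall fun x s hs => ?_) (integrable_cutoff_mul hR continuous_const)
    (Eventually.of_forall fun x s _ => (h x s).const_mul _)).2
  rw [norm_mul, Real.norm_of_nonneg (cutoff_nonneg R x)]
  rcases le_total R ‖x‖ with hx | hx
  · simp [cutoff_eq_zero hR hx]
  · exact mul_le_mul_of_nonneg_left (hC (x, s) ⟨by simpa using hx, hs⟩) (cutoff_nonneg R x)

theorem tendsto_integral_cutoff_mul {f : EuclideanSpace ℝ (Fin d) → ℝ} (hf : Integrable f) :
    Tendsto (fun R : ℝ => ∫ x, cutoff R x * f x) atTop (nhds (∫ x, f x)) := by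
  refine tendsto_integral_filter_of_dominated_convergence (fun x => ‖f x‖)
    (Eventually.of_forall fun R =>
      (continuous_cutoff R).aestronglyMeasurable.mul hf.aestronglyMeasurable)
    (Eventually.of_forall fun R => Eventually.of_forall fun x => ?_) hf.norm
    (Eventually.of_forall fun x => ?_)
  · rw [norm_mul, Real.norm_of_nonneg (cutoff_nonneg R x)]
    exact mul_le_of_le_one_left (norm_nonneg _) (cutoff_le_one R x)
  · simpa using (tendsto_cutoff x).mul_const (f x)

theorem integral_cutoff_mul_le {f : EuclideanSpace ℝ (Fin d) → ℝ} (hf : Integrable f)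
    (h0 : ∀ x, 0 ≤ f x) (R : ℝ) : ∫ x, cutoff R x * f x ≤ ∫ x, f x :=
  integral_mono_of_nonneg (Eventually.of_forall fun x => mul_nonneg (cutoff_nonneg R x) (h0 x)) hf
    (Eventually.of_forall fun x => mul_le_of_le_one_left (h0 x) (cutoff_le_one R x))

/-- Fatou's lemma for nonnegative continuous integrands bounded in mean. -/
theorem integrable_of_tendsto_of_integral_le {f : EuclideanSpace ℝ (Fin d) → ℝ}
    {F : ℝ → EuclideanSpace ℝ (Fin d) → ℝ} {B : ℝ} (hf : AEStronglyMeasurable f)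
    (hf0 : ∀ x, 0 ≤ f x)
    (hF : ∀ᶠ R in atTop, Integrable (F R)) (hF0 : ∀ᶠ R in atTop, ∀ x, 0 ≤ F R x)
    (hB : ∀ᶠ R in atTop, ∫ x, F R x ≤ B)
    (hlim : ∀ᵐ x, Tendsto (fun R => F R x) atTop (nhds (f x))) :
    Integrable f ∧ ∫ x, f x ≤ B := by
  have hev := hF.and (hF0.and hB)
  obtain ⟨R₀, hR₀⟩ := hev.exists_forall_of_atTop
  set G : ℕ → EuclideanSpace ℝ (Fin d) → ℝ := fun n => F (R₀ + n) with hG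
  have hGp : ∀ n : ℕ, Integrable (G n) ∧ (∀ x, 0 ≤ G n x) ∧ ∫ x, G n x ≤ B := fun n =>
    hR₀ _ (by simp)
  have hB0 : 0 ≤ B := (integral_nonneg (hGp 0).2.1).trans (hGp 0).2.2
  have hnat : Tendsto (fun n : ℕ => R₀ + (n : ℝ)) atTop atTop :=
    tendsto_atTop_add_const_left _ _ tendsto_natCast_atTop_atTop
  have hle : ∫⁻ x, ENNReal.ofReal (f x) ≤ ENNReal.ofReal B := by
    calc ∫⁻ x, ENNReal.ofReal (f x)
        = ∫⁻ x, liminf (fun n => ENNReal.ofReal (G n x)) atTop := by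
          refine lintegral_congr_ae ?_
          filter_upwards [hlim] with x hx
          exact ((ENNReal.tendsto_ofReal (hx.comp hnat)).liminf_eq).symm
      _ ≤ liminf (fun n => ∫⁻ x, ENNReal.ofReal (G n x)) atTop :=
          lintegral_liminf_le' fun n => (hGp n).1.aestronglyMeasurable.aemeasurable.ennreal_ofReal
      _ ≤ ENNReal.ofReal B := by
          refine liminf_le_of_frequently_le' (Frequently.of_forall fun n => ?_)
          rw [← ofReal_integral_eq_lintegral_ofReal (hGp n).1 (Eventually.of_forall (hGp n).2.1)]
          exact ENNReal.ofReal_le_ofReal (hGp n).2.2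
  refine ⟨⟨hf, ?_⟩, ?_⟩
  · rw [hasFiniteIntegral_iff_ofReal (Eventually.of_forall hf0)]
    exact hle.trans_lt ENNReal.ofReal_lt_top
  · rw [integral_eq_lintegral_of_nonneg_ae (Eventually.of_forall hf0) hf]
    exact ENNReal.toReal_le_of_le_ofReal hB0 hle

/-! ### Localized conservation laws -/

theorem sum_integral_cutoff_mul_partial {R : ℝ} (hR : 0 < R)
    {F F' : Fin d → EuclideanSpace ℝ (Fin d) → ℝ} (hF : ∀ i, Continuous (F i))
    (hF' : ∀ i, Continuous (F' i)) (h : ∀ i x, HasPartial i (F i) (F' i x) x) :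
    ∑ i, ∫ x, cutoff R x * F' i x = ∫ x, ∑ i, -(cutoffPartial R i x * F i x) := by
  have hint : ∀ i ∈ Finset.univ, Integrable fun x => -(cutoffPartial R i x * F i x) :=
    fun i _ => (integrable_cutoffPartial_mul hR i (hF i)).neg
  rw [integral_finsetSum _ hint]
  refine Finset.sum_congr rfl fun i _ => ?_
  rw [integral_cutoff_mul_partial hR i (hF i) (hF' i) (h i), integral_neg]

/-- If `∂ₜe ≤ div F + G` with `F` uniformly integrable in space, then the cutoff integral of `e`
grows at most at the rate of the cutoff integral of `G`, up to an error `O(1/R)`. -/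
theorem integral_cutoff_mul_sub_le {R : ℝ} (hR : 0 < R)
    {e e' : EuclideanSpace ℝ (Fin d) → ℝ → ℝ}
    (he : Continuous (Function.uncurry e)) (he' : Continuous (Function.uncurry e'))
    (hderiv : ∀ x t, HasDerivAt (e x) (e' x t) t)
    {F F' : Fin d → EuclideanSpace ℝ (Fin d) → ℝ → ℝ}
    (hF : ∀ i, Continuous (Function.uncurry (F i)))
    (hF' : ∀ i, Continuous (Function.uncurry (F' i)))
    (hpartial : ∀ i x t, HasPartial i (fun y => F i y t) (F' i x t) x)
    {G H : EuclideanSpace ℝ (Fin d) → ℝ → ℝ} (hG : Continuous (Function.uncurry G)) {K : ℝ}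
    (hH : ∀ t, 0 ≤ t → Integrable (fun x => H x t)) (hK : ∀ t, 0 ≤ t → ∫ x, H x t ≤ K)
    (hFH : ∀ x t, ∑ i, |F i x t| ≤ H x t) (hle : ∀ x t, e' x t ≤ ∑ i, F' i x t + G x t)
    {t₁ t₂ γ : ℝ} (h0 : 0 ≤ t₁) (h12 : t₁ ≤ t₂)
    (hγ : ∀ t, t₁ ≤ t → t ≤ t₂ → ∫ x, cutoff R x * G x t ≤ γ) :
    (∫ x, cutoff R x * e x t₂) - ∫ x, cutoff R x * e x t₁ ≤ (γ + 4 / R * K) * (t₂ - t₁) := by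
  have hd := hasDerivAt_integral_cutoff_mul hR he he' hderiv
  refine (convex_Icc t₁ t₂).image_sub_le_mul_sub_of_deriv_le
    (fun t _ => (hd t).continuousAt.continuousWithinAt)
    (fun t _ => (hd t).differentiableAt.differentiableWithinAt) (fun t ht => ?_)
    t₁ ⟨le_rfl, h12⟩ t₂ ⟨h12, le_rfl⟩ h12
  have htIcc : t ∈ Set.Icc t₁ t₂ := interior_subset ht
  have ht0 : 0 ≤ t := h0.trans htIcc.1
  rw [(hd t).deriv]
  have hFc : ∀ i, Continuous fun x => F i x t := fun i => by
    have := hF i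
    fun_prop
  have hFc' : ∀ i, Continuous fun x => F' i x t := fun i => by
    have := hF' i
    fun_prop
  have hGc : Continuous fun x => G x t := by fun_prop
  have hec : Continuous fun x => e' x t := by fun_prop
  have h1 : ∫ x, cutoff R x * e' x t
      ≤ ∫ x, (∑ i, cutoff R x * F' i x t + cutoff R x * G x t) := by
    refine integral_mono (integrable_cutoff_mul hR hec)
      ((integrable_finsetSum _ fun i _ => integrable_cutoff_mul hR (hFc' i)).add
        (integrable_cutoff_mul hR hGc)) fun x => ?_
    simp only
    rw [← Finset.mul_sum, ← mul_add]
    exact mul_le_mul_of_nonneg_left (hle x t) (cutoff_nonneg R x)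
  rw [integral_add (integrable_finsetSum _ fun i _ => integrable_cutoff_mul hR (hFc' i))
    (integrable_cutoff_mul hR hGc), integral_finsetSum _
      fun i _ => integrable_cutoff_mul hR (hFc' i)] at h1
  have h2 : ∑ i, ∫ x, cutoff R x * F' i x t ≤ 4 / R * K := by
    have h4 : ∫ x, ∑ i, -(cutoffPartial R i x * F i x t) ≤ ∫ x, 4 / R * H x t := by
      refine integral_mono
        (integrable_finsetSum _ fun i _ => (integrable_cutoffPartial_mul hR i (hFc i)).neg)
        ((hH t ht0).const_mul _) fun x => ?_
      calc ∑ i, -(cutoffPartial R i x * F i x t) ≤ ∑ i, 4 / R * |F i x t| := by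
            refine Finset.sum_le_sum fun i _ => (neg_le_abs _).trans ?_
            rw [abs_mul]
            exact mul_le_mul_of_nonneg_right (abs_cutoffPartial_le hR i x) (abs_nonneg _)
        _ ≤ 4 / R * H x t := by
            rw [← Finset.mul_sum]
            exact mul_le_mul_of_nonneg_left (hFH x t) (by positivity)
    rw [integral_const_mul] at h4
    rw [sum_integral_cutoff_mul_partial hR hFc hFc' fun i x => hpartial i x t]
    exact h4.trans (mul_le_mul_of_nonneg_left (hK t ht0) (by positivity))
  linarith [hγ t htIcc.1 htIcc.2]

/-! ### Hardy's inequality -/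

theorem sum_coord_mul_sq_le (x : EuclideanSpace ℝ (Fin d)) (b : Fin d → ℝ) :
    (∑ i, x i * b i) ^ 2 ≤ ‖x‖ ^ 2 * ∑ i, b i ^ 2 := by
  rw [EuclideanSpace.real_norm_sq_eq]
  exact Finset.sum_mul_sq_le_sq_mul_sq _ _ _

theorem integral_sq_div_add_le (hd : 3 ≤ d) {f : EuclideanSpace ℝ (Fin d) → ℝ}
    {f' : Fin d → EuclideanSpace ℝ (Fin d) → ℝ} (hf : Continuous f) (hf' : ∀ i, Continuous (f' i))
    (hpartial : ∀ i x, HasPartial i f (f' i x) x)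
    (hint : Integrable fun x => weight x ^ 2 * f x ^ 2)
    (hint' : Integrable fun x => ∑ i, f' i x ^ 2) {ε : ℝ} (hε : 0 < ε) (hε1 : ε ≤ 1) :
    Integrable (fun x => (ε + ‖x‖ ^ 2)⁻¹ * f x ^ 2) ∧
      ∫ x, (ε + ‖x‖ ^ 2)⁻¹ * f x ^ 2 ≤ 4 * ∫ x, ∑ i, f' i x ^ 2 := by
  set p : EuclideanSpace ℝ (Fin d) → ℝ := fun x => (ε + ‖x‖ ^ 2)⁻¹ with hp
  have hp0 : ∀ x, 0 < p x := fun x => by simp only [hp]; positivity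
  have hpmul : ∀ x, p x * (ε + ‖x‖ ^ 2) = 1 := fun x => inv_mul_cancel₀ (by positivity)
  have hpc : Continuous p := Continuous.inv₀ (by fun_prop) fun x => by positivity
  have hpp : ∀ i x, HasPartial i p (-(2 * x i * p x ^ 2)) x := fun i x => by
    have h1 := (((hasPartial_norm_sq i x).const_add ε).fun_inv (by positivity))
    refine h1.congr_deriv ?_
    simp only [zero_smul, add_zero, hp]
    field_simp
  have hpw : ∀ x, p x ≤ ε⁻¹ * weight x ^ 2 := fun x => by
    rw [weight_sq, ← mul_inv]
    refine inv_anti₀ (by positivity) ?_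
    nlinarith [sq_nonneg ‖x‖]
  have hpint : Integrable fun x => p x * f x ^ 2 := by
    refine (hint.const_mul ε⁻¹).mono' (by fun_prop) (Eventually.of_forall fun x => ?_)
    rw [Real.norm_of_nonneg (mul_nonneg (hp0 x).le (sq_nonneg _)), ← mul_assoc]
    exact mul_le_mul_of_nonneg_right (hpw x) (sq_nonneg _)
  refine ⟨hpint, ?_⟩
  set F : Fin d → EuclideanSpace ℝ (Fin d) → ℝ := fun i x => f x ^ 2 * (x i * p x) with hFdef
  set F' : Fin d → EuclideanSpace ℝ (Fin d) → ℝ := fun i x =>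
    2 * f x * f' i x * (x i * p x) + f x ^ 2 * (p x - 2 * x i ^ 2 * p x ^ 2) with hF'def
  have hFc : ∀ i, Continuous (F i) := fun i => by fun_prop
  have hFc' : ∀ i, Continuous (F' i) := fun i => by fun_prop
  have hFp : ∀ i x, HasPartial i (F i) (F' i x) x := fun i x => by
    have h1 := ((hpartial i x).fun_pow 2).fun_mul ((hasPartial_coord i i x).fun_mul (hpp i x))
    refine h1.congr_deriv ?_
    simp only [zero_smul, add_zero, hF'def, if_true]
    push_cast
    ring
  set Q : EuclideanSpace ℝ (Fin d) → ℝ := fun x => p x * f x ^ 2 / 2 - 2 * ∑ i, f' i x ^ 2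
    with hQ
  have hQc : Continuous Q := by fun_prop
  have hQint : Integrable Q := (hpint.div_const 2).sub (hint'.const_mul 2)
  have hQF : ∀ x, Q x ≤ ∑ i, F' i x := fun x => by
    have h1 : ∑ i, F' i x = 2 * p x * f x * (∑ i, x i * f' i x)
        + f x ^ 2 * (d * p x - 2 * ‖x‖ ^ 2 * p x ^ 2) := by
      have h2 : ∀ i, F' i x = 2 * p x * f x * (x i * f' i x) + f x ^ 2 * p x
          - 2 * f x ^ 2 * p x ^ 2 * x i ^ 2 := fun i => by
        simp only [hF'def]
        ring
      simp only [h2, Finset.sum_add_distrib, Finset.sum_sub_distrib, ← Finset.mul_sum,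
        Finset.sum_const, Finset.card_univ, Fintype.card_fin, nsmul_eq_mul,
        EuclideanSpace.real_norm_sq_eq]
      ring
    rw [h1]
    have h2 := sum_coord_mul_sq_le x fun i => f' i x
    set S := ∑ i, x i * f' i x
    set N := ∑ i, f' i x ^ 2 with hN
    have hN0 : 0 ≤ N := Finset.sum_nonneg fun i _ => sq_nonneg _
    have h3 := hpmul x
    have h4 := hp0 x
    have hd' : (3 : ℝ) ≤ d := by exact_mod_cast hd
    have h5 : p x * ‖x‖ ^ 2 ≤ 1 := by nlinarith
    have h6 : p x ≤ d * p x - 2 * ‖x‖ ^ 2 * p x ^ 2 := by nlinarith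
    have h7 : f x ^ 2 * p x ≤ f x ^ 2 * (d * p x - 2 * ‖x‖ ^ 2 * p x ^ 2) :=
      mul_le_mul_of_nonneg_left h6 (sq_nonneg _)
    have h8 : p x * S ^ 2 ≤ N := by
      calc p x * S ^ 2 ≤ p x * (‖x‖ ^ 2 * N) := mul_le_mul_of_nonneg_left h2 h4.le
        _ = p x * ‖x‖ ^ 2 * N := by ring
        _ ≤ 1 * N := mul_le_mul_of_nonneg_right h5 hN0
        _ = N := one_mul N
    have h9 : 0 ≤ p x * (f x + 2 * S) ^ 2 := by positivity
    simp only [hQ]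
    nlinarith
  have hbound : ∀ R : ℝ, 0 < R →
      ∫ x, cutoff R x * Q x ≤ ∫ x, ∑ i, -(cutoffPartial R i x * F i x) := fun R hR => by
    have h1 : ∫ x, cutoff R x * Q x ≤ ∫ x, ∑ i, cutoff R x * F' i x := by
      refine integral_mono (integrable_cutoff_mul hR hQc)
        (integrable_finsetSum _ fun i _ => integrable_cutoff_mul hR (hFc' i)) fun x => ?_
      simp only
      rw [← Finset.mul_sum]
      exact mul_le_mul_of_nonneg_left (hQF x) (cutoff_nonneg R x)
    rwa [integral_finsetSum _ fun i _ => integrable_cutoff_mul hR (hFc' i),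
      sum_integral_cutoff_mul_partial hR hFc hFc' hFp] at h1
  have hlim : Tendsto (fun R : ℝ => ∫ x, ∑ i, -(cutoffPartial R i x * F i x)) atTop
      (nhds (∫ _ : EuclideanSpace ℝ (Fin d), (0 : ℝ))) := by
    refine tendsto_integral_filter_of_dominated_convergence
      (fun x => ∑ _i : Fin d, 4 * (p x * f x ^ 2))
      (Eventually.of_forall fun R => ?_) ?_
      (integrable_finsetSum _ fun i _ => hpint.const_mul 4) (Eventually.of_forall fun x => ?_)
    · have : Continuous fun x => ∑ i, -(cutoffPartial R i x * F i x) := by fun_prop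
      exact this.aestronglyMeasurable
    · filter_upwards [eventually_gt_atTop 0] with R hR
      refine Eventually.of_forall fun x => (norm_sum_le _ _).trans
        (Finset.sum_le_sum fun i _ => ?_)
      rw [norm_neg, norm_mul, Real.norm_eq_abs, Real.norm_eq_abs, hFdef, abs_mul, abs_mul,
        abs_of_nonneg (sq_nonneg (f x)), abs_of_pos (hp0 x)]
      calc |cutoffPartial R i x| * (f x ^ 2 * (|x i| * p x))
          = (|cutoffPartial R i x| * |x i|) * (p x * f x ^ 2) := by ring
        _ ≤ (|cutoffPartial R i x| * ‖x‖) * (p x * f x ^ 2) := by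
            have := hp0 x
            gcongr
            exact abs_coord_le x i
        _ ≤ 4 * (p x * f x ^ 2) := by
            have := hp0 x
            gcongr
            exact abs_cutoffPartial_mul_norm_le hR i x
    · have : Tendsto (fun R => ∑ i, -(cutoffPartial R i x * F i x)) atTop
          (nhds (∑ i : Fin d, -(0 * F i x))) :=
        tendsto_finsetSum _ fun i _ => ((tendsto_cutoffPartial i x).mul_const _).neg
      simpa using this
  have hfin : ∫ x, Q x ≤ ∫ _ : EuclideanSpace ℝ (Fin d), (0 : ℝ) := by
    refine le_of_tendsto_of_tendsto (tendsto_integral_cutoff_mul hQint) hlim ?_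
    filter_upwards [eventually_gt_atTop 0] with R hR using hbound R hR
  rw [hQ, integral_sub (hpint.div_const 2) (hint'.const_mul 2), integral_div,
    integral_const_mul, integral_zero] at hfin
  linarith

/-- **Hardy's inequality** for functions with `f / (1 + |x|) ∈ L²`. -/
theorem hardy (hd : 3 ≤ d) {f : EuclideanSpace ℝ (Fin d) → ℝ}
    {f' : Fin d → EuclideanSpace ℝ (Fin d) → ℝ} (hf : Continuous f) (hf' : ∀ i, Continuous (f' i))
    (hpartial : ∀ i x, HasPartial i f (f' i x) x)
    (hint : Integrable fun x => weight x ^ 2 * f x ^ 2)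
    (hint' : Integrable fun x => ∑ i, f' i x ^ 2) :
    Integrable (fun x => f x ^ 2 / ‖x‖ ^ 2) ∧
      ∫ x, f x ^ 2 / ‖x‖ ^ 2 ≤ 4 * ∫ x, ∑ i, f' i x ^ 2 := by
  have key : ∀ᶠ R : ℝ in atTop, Integrable (fun x => (R⁻¹ + ‖x‖ ^ 2)⁻¹ * f x ^ 2) ∧
      ∫ x, (R⁻¹ + ‖x‖ ^ 2)⁻¹ * f x ^ 2 ≤ 4 * ∫ x, ∑ i, f' i x ^ 2 := by
    filter_upwards [eventually_ge_atTop 1] with R hR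
    exact integral_sq_div_add_le hd hf hf' hpartial hint hint' (by positivity)
      (inv_le_one_of_one_le₀ hR)
  have : Nontrivial (EuclideanSpace ℝ (Fin d)) := by
    have : Nonempty (Fin d) := ⟨⟨0, by omega⟩⟩
    infer_instance
  refine integrable_of_tendsto_of_integral_le (F := fun R x => (R⁻¹ + ‖x‖ ^ 2)⁻¹ * f x ^ 2)
    ?_ (fun x => by positivity) (key.mono fun R h => h.1) ?_ (key.mono fun R h => h.2) ?_
  · exact (hf.measurable.pow_const 2 |>.div (measurable_norm.pow_const 2)).aestronglyMeasurable
  · filter_upwards [eventually_gt_atTop 0] with R hR x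
    positivity
  · have h0 : ∀ᵐ x : EuclideanSpace ℝ (Fin d), x ≠ 0 := by
      simp [ae_iff, measure_singleton]
    filter_upwards [h0] with x hx
    have hx' : (0 : ℝ) + ‖x‖ ^ 2 ≠ 0 := by
      have := norm_pos_iff.2 hx
      positivity
    have h1 := ((tendsto_inv_atTop_zero (𝕜 := ℝ)).add_const (‖x‖ ^ 2)).inv₀ hx'
    have h2 := h1.mul_const (f x ^ 2)
    rw [zero_add] at h2
    rwa [div_eq_inv_mul]

/-! ### Classical solutions of the wave equation -/

/-- A classical solution of the free wave equation together with its derivatives up to second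
order. -/
structure WaveJet (d : ℕ) where
  /-- the solution -/
  u : EuclideanSpace ℝ (Fin d) → ℝ → ℝ
  /-- time derivative -/
  ut : EuclideanSpace ℝ (Fin d) → ℝ → ℝ
  /-- space derivatives -/
  ux : Fin d → EuclideanSpace ℝ (Fin d) → ℝ → ℝ
  /-- mixed derivatives -/
  uxt : Fin d → EuclideanSpace ℝ (Fin d) → ℝ → ℝ
  /-- second space derivatives -/
  uxx : Fin d → Fin d → EuclideanSpace ℝ (Fin d) → ℝ → ℝ
  cont_u : Continuous (Function.uncurry u)
  cont_ut : Continuous (Function.uncurry ut)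
  cont_ux : ∀ i, Continuous (Function.uncurry (ux i))
  cont_uxt : ∀ i, Continuous (Function.uncurry (uxt i))
  cont_uxx : ∀ i j, Continuous (Function.uncurry (uxx i j))
  deriv_u : ∀ x t, HasDerivAt (u x) (ut x t) t
  deriv_ut : ∀ x t, HasDerivAt (ut x) (∑ i, uxx i i x t) t
  deriv_ux : ∀ i x t, HasDerivAt (ux i x) (uxt i x t) t
  partial_u : ∀ i x t, HasPartial i (fun y => u y t) (ux i x t) x
  partial_ut : ∀ i x t, HasPartial i (fun y => ut y t) (uxt i x t) x
  partial_ux : ∀ i j x t, HasPartial j (fun y => ux i y t) (uxx i j x t) x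
  symm : ∀ i j x t, uxx i j x t = uxx j i x t

namespace WaveJet

section Continuity

variable {X : Type*} [TopologicalSpace X] {f : X → EuclideanSpace ℝ (Fin d)} {g : X → ℝ}

@[fun_prop]
theorem continuous_u (w : WaveJet d) (hf : Continuous f) (hg : Continuous g) :
    Continuous fun z => w.u (f z) (g z) := w.cont_u.comp (hf.prodMk hg)

@[fun_prop]
theorem continuous_ut (w : WaveJet d) (hf : Continuous f) (hg : Continuous g) :
    Continuous fun z => w.ut (f z) (g z) := w.cont_ut.comp (hf.prodMk hg)

@[fun_prop]
theorem continuous_ux (w : WaveJet d) (i : Fin d) (hf : Continuous f) (hg : Continuous g) :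
    Continuous fun z => w.ux i (f z) (g z) := (w.cont_ux i).comp (hf.prodMk hg)

@[fun_prop]
theorem continuous_uxt (w : WaveJet d) (i : Fin d) (hf : Continuous f) (hg : Continuous g) :
    Continuous fun z => w.uxt i (f z) (g z) := (w.cont_uxt i).comp (hf.prodMk hg)

@[fun_prop]
theorem continuous_uxx (w : WaveJet d) (i j : Fin d) (hf : Continuous f) (hg : Continuous g) :
    Continuous fun z => w.uxx i j (f z) (g z) := (w.cont_uxx i j).comp (hf.prodMk hg)

end Continuity

/-- The linear combination of two solutions. -/
def comb (α β : ℝ) (w v : WaveJet d) : WaveJet d where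
  u x t := α * w.u x t + β * v.u x t
  ut x t := α * w.ut x t + β * v.ut x t
  ux i x t := α * w.ux i x t + β * v.ux i x t
  uxt i x t := α * w.uxt i x t + β * v.uxt i x t
  uxx i j x t := α * w.uxx i j x t + β * v.uxx i j x t
  cont_u := by simp only [Function.uncurry_def]; fun_prop
  cont_ut := by simp only [Function.uncurry_def]; fun_prop
  cont_ux i := by simp only [Function.uncurry_def]; fun_prop
  cont_uxt i := by simp only [Function.uncurry_def]; fun_prop
  cont_uxx i j := by simp only [Function.uncurry_def]; fun_prop
  deriv_u x t := ((w.deriv_u x t).const_mul α).add ((v.deriv_u x t).const_mul β)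
  deriv_ut x t := by
    rw [Finset.sum_add_distrib, ← Finset.mul_sum, ← Finset.mul_sum]
    exact ((w.deriv_ut x t).const_mul α).add ((v.deriv_ut x t).const_mul β)
  deriv_ux i x t := ((w.deriv_ux i x t).const_mul α).add ((v.deriv_ux i x t).const_mul β)
  partial_u i x t := ((w.partial_u i x t).const_mul α).add ((v.partial_u i x t).const_mul β)
  partial_ut i x t := ((w.partial_ut i x t).const_mul α).add ((v.partial_ut i x t).const_mul β)
  partial_ux i j x t :=
    ((w.partial_ux i j x t).const_mul α).add ((v.partial_ux i j x t).const_mul β)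
  symm i j x t := by rw [w.symm i j, v.symm i j]

/-- The time translate of a solution. -/
def shift (s : ℝ) (w : WaveJet d) : WaveJet d where
  u x t := w.u x (t + s)
  ut x t := w.ut x (t + s)
  ux i x t := w.ux i x (t + s)
  uxt i x t := w.uxt i x (t + s)
  uxx i j x t := w.uxx i j x (t + s)
  cont_u := by simp only [Function.uncurry_def]; fun_prop
  cont_ut := by simp only [Function.uncurry_def]; fun_prop
  cont_ux i := by simp only [Function.uncurry_def]; fun_prop
  cont_uxt i := by simp only [Function.uncurry_def]; fun_prop
  cont_uxx i j := by simp only [Function.uncurry_def]; fun_prop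
  deriv_u x t := (w.deriv_u x (t + s)).comp_add_const t s
  deriv_ut x t := (w.deriv_ut x (t + s)).comp_add_const t s
  deriv_ux i x t := (w.deriv_ux i x (t + s)).comp_add_const t s
  partial_u i x t := w.partial_u i x (t + s)
  partial_ut i x t := w.partial_ut i x (t + s)
  partial_ux i j x t := w.partial_ux i j x (t + s)
  symm i j x t := w.symm i j x (t + s)

/-- The squared norm of the spatial gradient. -/
def gradSq (w : WaveJet d) (x : EuclideanSpace ℝ (Fin d)) (t : ℝ) : ℝ := ∑ i, w.ux i x t ^ 2

/-- The energy density. -/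
def dens (w : WaveJet d) (x : EuclideanSpace ℝ (Fin d)) (t : ℝ) : ℝ :=
  w.gradSq x t + w.ut x t ^ 2

/-- The energy density augmented by the Hardy weighted square of the solution. -/
noncomputable def fullDens (w : WaveJet d) (x : EuclideanSpace ℝ (Fin d)) (t : ℝ) : ℝ :=
  w.dens x t + weight x ^ 2 * w.u x t ^ 2

/-- A spatially weighted local energy density. -/
noncomputable def localDens (w : WaveJet d) (x : EuclideanSpace ℝ (Fin d)) (t : ℝ) : ℝ :=
  weight x ^ 8 * (w.dens x t + w.u x t ^ 2)

@[fun_prop]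
theorem continuous_gradSq {X : Type*} [TopologicalSpace X] {f : X → EuclideanSpace ℝ (Fin d)}
    {g : X → ℝ} (w : WaveJet d) (hf : Continuous f) (hg : Continuous g) :
    Continuous fun z => w.gradSq (f z) (g z) := by
  unfold gradSq; fun_prop

@[fun_prop]
theorem continuous_dens {X : Type*} [TopologicalSpace X] {f : X → EuclideanSpace ℝ (Fin d)}
    {g : X → ℝ} (w : WaveJet d) (hf : Continuous f) (hg : Continuous g) :
    Continuous fun z => w.dens (f z) (g z) := by
  unfold dens; fun_prop

@[fun_prop]
theorem continuous_fullDens {X : Type*} [TopologicalSpace X] {f : X → EuclideanSpace ℝ (Fin d)}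
    {g : X → ℝ} (w : WaveJet d) (hf : Continuous f) (hg : Continuous g) :
    Continuous fun z => w.fullDens (f z) (g z) := by
  unfold fullDens; fun_prop

@[fun_prop]
theorem continuous_localDens {X : Type*} [TopologicalSpace X] {f : X → EuclideanSpace ℝ (Fin d)}
    {g : X → ℝ} (w : WaveJet d) (hf : Continuous f) (hg : Continuous g) :
    Continuous fun z => w.localDens (f z) (g z) := by
  unfold localDens; fun_prop

variable (w : WaveJet d) (x : EuclideanSpace ℝ (Fin d)) (t : ℝ)

theorem gradSq_nonneg : 0 ≤ w.gradSq x t := Finset.sum_nonneg fun _ _ => sq_nonneg _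

theorem dens_nonneg : 0 ≤ w.dens x t := add_nonneg (w.gradSq_nonneg x t) (sq_nonneg _)

theorem dens_le_fullDens : w.dens x t ≤ w.fullDens x t :=
  le_add_of_nonneg_right (by positivity)

theorem fullDens_nonneg : 0 ≤ w.fullDens x t := (w.dens_nonneg x t).trans (w.dens_le_fullDens x t)

theorem localDens_nonneg : 0 ≤ w.localDens x t :=
  mul_nonneg (pow_nonneg (weight_pos x).le _) (add_nonneg (w.dens_nonneg x t) (sq_nonneg _))

theorem localDens_le_fullDens : w.localDens x t ≤ w.fullDens x t := by
  have h0 := (weight_pos x).le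
  have h1 : weight x ^ 8 ≤ 1 := pow_le_one₀ h0 (weight_le_one x)
  have h2 : weight x ^ 8 ≤ weight x ^ 2 := pow_le_pow_of_le_one h0 (weight_le_one x) (by norm_num)
  have h3 := mul_le_mul_of_nonneg_right h1 (w.dens_nonneg x t)
  have h4 := mul_le_mul_of_nonneg_right h2 (sq_nonneg (w.u x t))
  unfold localDens fullDens
  linarith

theorem hasDerivAt_gradSq :
    HasDerivAt (w.gradSq x) (2 * ∑ i, w.ux i x t * w.uxt i x t) t := by
  have h : HasDerivAt (fun s => ∑ i, w.ux i x s ^ 2)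
      (∑ i, (2 : ℕ) * w.ux i x t ^ (2 - 1) * w.uxt i x t) t :=
    HasDerivAt.fun_sum fun i _ => (w.deriv_ux i x t).fun_pow 2
  refine h.congr_deriv ?_
  rw [Finset.mul_sum]
  exact Finset.sum_congr rfl fun i _ => by push_cast; ring

theorem hasDerivAt_dens : HasDerivAt (w.dens x)
    (2 * (∑ i, w.ux i x t * w.uxt i x t) + 2 * w.ut x t * ∑ i, w.uxx i i x t) t := by
  have h := (w.hasDerivAt_gradSq x t).fun_add ((w.deriv_ut x t).fun_pow 2)
  refine h.congr_deriv ?_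
  push_cast
  ring

theorem sum_ut_mul_ux_le : ∑ i, |2 * w.ut x t * w.ux i x t| ≤ (d + 1) * w.dens x t := by
  have h1 : ∀ i, |2 * w.ut x t * w.ux i x t| ≤ w.ut x t ^ 2 + w.ux i x t ^ 2 := fun i => by
    rw [abs_le]
    constructor <;> nlinarith [sq_nonneg (w.ut x t + w.ux i x t), sq_nonneg (w.ut x t - w.ux i x t)]
  calc ∑ i, |2 * w.ut x t * w.ux i x t| ≤ ∑ i, (w.ut x t ^ 2 + w.ux i x t ^ 2) :=
        Finset.sum_le_sum fun i _ => h1 i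
    _ = d * w.ut x t ^ 2 + w.gradSq x t := by
        simp [Finset.sum_add_distrib, gradSq]
    _ ≤ (d + 1) * w.dens x t := by
        unfold dens
        have := w.gradSq_nonneg x t
        have hd : (0 : ℝ) ≤ d := Nat.cast_nonneg d
        nlinarith [mul_nonneg hd this, sq_nonneg (w.ut x t)]

/-- A solution whose energy is bounded for nonnegative times and which vanishes at infinity in the
mean. -/
structure FiniteEnergy (w : WaveJet d) (K : ℝ) : Prop where
  integrable_dens : ∀ t, 0 ≤ t → Integrable fun x => w.dens x t
  integral_dens_le : ∀ t, 0 ≤ t → ∫ x, w.dens x t ≤ K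
  integrable_sq : ∀ t, 0 ≤ t → Integrable fun x => weight x ^ 2 * w.u x t ^ 2

variable {w} {K : ℝ}

theorem FiniteEnergy.integrable_gradSq (hw : w.FiniteEnergy K) (ht : 0 ≤ t) :
    Integrable fun x => w.gradSq x t :=
  (hw.integrable_dens t ht).mono' (by fun_prop) (Eventually.of_forall fun x => by
    rw [Real.norm_of_nonneg (w.gradSq_nonneg x t)]
    exact le_add_of_nonneg_right (sq_nonneg _))

theorem FiniteEnergy.integrable_fullDens (hw : w.FiniteEnergy K) (ht : 0 ≤ t) :
    Integrable fun x => w.fullDens x t :=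
  (hw.integrable_dens t ht).add (hw.integrable_sq t ht)

theorem FiniteEnergy.hardy (hd : 3 ≤ d) (hw : w.FiniteEnergy K) (ht : 0 ≤ t) :
    Integrable (fun x => w.u x t ^ 2 / ‖x‖ ^ 2) ∧
      ∫ x, w.u x t ^ 2 / ‖x‖ ^ 2 ≤ 4 * ∫ x, w.dens x t := by
  obtain ⟨h1, h2⟩ := FreeWave.hardy hd (f := fun x => w.u x t) (f' := fun i x => w.ux i x t)
    (by fun_prop) (fun i => by fun_prop) (fun i x => w.partial_u i x t) (hw.integrable_sq t ht)
    (hw.integrable_gradSq t ht)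
  refine ⟨h1, h2.trans (mul_le_mul_of_nonneg_left ?_ (by norm_num))⟩
  exact integral_mono (hw.integrable_gradSq t ht) (hw.integrable_dens t ht) fun x =>
    le_add_of_nonneg_right (sq_nonneg _)

theorem weight_sq_mul_le_div {x : EuclideanSpace ℝ (Fin d)} (hx : x ≠ 0) (a : ℝ) :
    weight x ^ 2 * a ^ 2 ≤ a ^ 2 / ‖x‖ ^ 2 := by
  have hx' := norm_pos_iff.2 hx
  rw [weight_sq, div_eq_inv_mul]
  exact mul_le_mul_of_nonneg_right (inv_anti₀ (by positivity) (by linarith)) (sq_nonneg a)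

theorem ae_ne_zero (hd : 3 ≤ d) : ∀ᵐ x : EuclideanSpace ℝ (Fin d), x ≠ 0 := by
  have : Nonempty (Fin d) := ⟨⟨0, by omega⟩⟩
  simp [ae_iff, measure_singleton]

theorem FiniteEnergy.integral_fullDens_le (hd : 3 ≤ d) (hw : w.FiniteEnergy K) (ht : 0 ≤ t) :
    ∫ x, w.fullDens x t ≤ 5 * K := by
  have h1 := hw.hardy t hd ht
  have h2 : ∫ x, weight x ^ 2 * w.u x t ^ 2 ≤ ∫ x, w.u x t ^ 2 / ‖x‖ ^ 2 := by
    refine integral_mono_ae (hw.integrable_sq t ht) h1.1 ?_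
    filter_upwards [ae_ne_zero hd] with x hx using weight_sq_mul_le_div hx _
  have h3 := hw.integral_dens_le t ht
  have h4 : ∫ x, w.fullDens x t = (∫ x, w.dens x t) + ∫ x, weight x ^ 2 * w.u x t ^ 2 :=
    integral_add (hw.integrable_dens t ht) (hw.integrable_sq t ht)
  linarith [h1.2]

theorem FiniteEnergy.integrable_localDens (hw : w.FiniteEnergy K) (ht : 0 ≤ t) :
    Integrable fun x => w.localDens x t :=
  (hw.integrable_fullDens t ht).mono' (by fun_prop) (Eventually.of_forall fun x => by
    rw [Real.norm_of_nonneg (w.localDens_nonneg x t)]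
    exact w.localDens_le_fullDens x t)

theorem FiniteEnergy.bound_nonneg (hw : w.FiniteEnergy K) : 0 ≤ K :=
  (integral_nonneg fun x => w.dens_nonneg x 0).trans (hw.integral_dens_le 0 le_rfl)

/-- The energy does not increase. -/
theorem FiniteEnergy.integral_dens_mono (hw : w.FiniteEnergy K) {t₁ t₂ : ℝ} (h0 : 0 ≤ t₁)
    (h12 : t₁ ≤ t₂) : ∫ x, w.dens x t₂ ≤ ∫ x, w.dens x t₁ := by
  have key : ∀ R : ℝ, 0 < R → (∫ x, cutoff R x * w.dens x t₂) - ∫ x, cutoff R x * w.dens x t₁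
      ≤ (0 + 4 / R * ((d + 1) * K)) * (t₂ - t₁) := fun R hR => by
    refine integral_cutoff_mul_sub_le hR (e := w.dens)
      (e' := fun x t => 2 * (∑ i, w.ux i x t * w.uxt i x t) + 2 * w.ut x t * ∑ i, w.uxx i i x t)
      (F := fun i x t => 2 * w.ut x t * w.ux i x t)
      (F' := fun i x t => 2 * w.uxt i x t * w.ux i x t + 2 * w.ut x t * w.uxx i i x t)
      (G := fun _ _ => 0) (H := fun x t => (d + 1) * w.dens x t)
      (by simp only [Function.uncurry_def]; fun_prop)
      (by simp only [Function.uncurry_def]; fun_prop)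
      (fun x t => w.hasDerivAt_dens x t)
      (fun i => by simp only [Function.uncurry_def]; fun_prop)
      (fun i => by simp only [Function.uncurry_def]; fun_prop)
      (fun i x t => ?_) (by simp only [Function.uncurry_def]; fun_prop)
      (fun t ht => (hw.integrable_dens t ht).const_mul _) (fun t ht => ?_)
      (fun x t => w.sum_ut_mul_ux_le x t) (fun x t => ?_) h0 h12 (fun t _ _ => ?_)
    · have h := ((w.partial_ut i x t).const_mul 2).fun_mul (w.partial_ux i i x t)
      refine h.congr_deriv ?_
      simp
    · rw [integral_const_mul]
      exact mul_le_mul_of_nonneg_left (hw.integral_dens_le t ht) (by positivity)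
    · rw [add_zero, Finset.sum_add_distrib, Finset.mul_sum, Finset.mul_sum]
      refine le_of_eq ?_
      congr 1
      exact Finset.sum_congr rfl fun i _ => by ring
    · simp
  have hlim : Tendsto (fun R : ℝ => (0 + 4 / R * ((d + 1) * K)) * (t₂ - t₁)) atTop
      (nhds ((0 + 0 * ((d + 1) * K)) * (t₂ - t₁))) :=
    (((tendsto_id.const_div_atTop 4).mul_const _).const_add 0).mul_const _
  have h := le_of_tendsto_of_tendsto
    ((tendsto_integral_cutoff_mul (hw.integrable_dens t₂ (h0.trans h12))).sub
      (tendsto_integral_cutoff_mul (hw.integrable_dens t₁ h0))) hlim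
    ((eventually_gt_atTop 0).mono key)
  simp only [zero_mul, add_zero] at h
  linarith

/-- The growth of the cutoff local energy is bounded. -/
theorem FiniteEnergy.integral_cutoff_localDens_sub_le (hd : 3 ≤ d) (hw : w.FiniteEnergy K) :
    ∃ C, 0 < C ∧ ∀ R : ℝ, 1 ≤ R → ∀ t₁ t₂ : ℝ, 0 ≤ t₁ → t₁ ≤ t₂ →
      (∫ x, cutoff R x * w.localDens x t₂) - ∫ x, cutoff R x * w.localDens x t₁
        ≤ C * (t₂ - t₁) := by
  have hK := hw.bound_nonneg
  refine ⟨9 * (5 * K) + 4 * ((d + 1) * K) + 1, by positivity, fun R hR t₁ t₂ h0 h12 => ?_⟩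
  have hR0 : 0 < R := by linarith
  have h : (∫ x, cutoff R x * w.localDens x t₂) - ∫ x, cutoff R x * w.localDens x t₁
      ≤ (9 * (5 * K) + 4 / R * ((d + 1) * K)) * (t₂ - t₁) := by
    refine integral_cutoff_mul_sub_le hR0 (e := w.localDens)
      (e' := fun x t => weight x ^ 8 * (2 * (∑ i, w.ux i x t * w.uxt i x t)
        + 2 * w.ut x t * (∑ i, w.uxx i i x t) + 2 * w.u x t * w.ut x t))
      (F := fun i x t => weight x ^ 8 * (2 * w.ut x t * w.ux i x t))
      (F' := fun i x t => -(8 * x i * weight x ^ 10) * (2 * w.ut x t * w.ux i x t)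
        + weight x ^ 8 * (2 * w.uxt i x t * w.ux i x t + 2 * w.ut x t * w.uxx i i x t))
      (G := fun x t => 9 * w.fullDens x t) (H := fun x t => (d + 1) * w.dens x t)
      (by simp only [Function.uncurry_def]; fun_prop)
      (by simp only [Function.uncurry_def]; fun_prop)
      (fun x t => ?_)
      (fun i => by simp only [Function.uncurry_def]; fun_prop)
      (fun i => by simp only [Function.uncurry_def]; fun_prop)
      (fun i x t => ?_) (by simp only [Function.uncurry_def]; fun_prop)
      (fun t ht => (hw.integrable_dens t ht).const_mul _) (fun t ht => ?_)
      (fun x t => ?_) (fun x t => ?_) h0 h12 (fun t ht _ => ?_)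
    · have h := ((w.hasDerivAt_dens x t).fun_add ((w.deriv_u x t).fun_pow 2)).const_mul
        (weight x ^ 8)
      refine h.congr_deriv ?_
      push_cast
      ring
    · have h := (hasPartial_weight_pow i x 8).fun_mul
        (((w.partial_ut i x t).const_mul 2).fun_mul (w.partial_ux i i x t))
      refine h.congr_deriv ?_
      simp
    · rw [integral_const_mul]
      exact mul_le_mul_of_nonneg_left (hw.integral_dens_le t ht) (by positivity)
    · refine le_trans (Finset.sum_le_sum fun i _ => ?_) (w.sum_ut_mul_ux_le x t)
      rw [abs_mul, abs_of_nonneg (pow_nonneg (weight_pos x).le 8)]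
      exact mul_le_of_le_one_left (abs_nonneg _) (pow_le_one₀ (weight_pos x).le (weight_le_one x))
    · have hsum : ∑ i, (-(8 * x i * weight x ^ 10) * (2 * w.ut x t * w.ux i x t)
          + weight x ^ 8 * (2 * w.uxt i x t * w.ux i x t + 2 * w.ut x t * w.uxx i i x t))
          = -(16 * weight x ^ 10 * w.ut x t) * (∑ i, x i * w.ux i x t)
            + weight x ^ 8 * (2 * (∑ i, w.ux i x t * w.uxt i x t)
              + 2 * w.ut x t * ∑ i, w.uxx i i x t) := by
        simp only [mul_add, Finset.mul_sum, ← Finset.sum_add_distrib]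
        exact Finset.sum_congr rfl fun i _ => by ring
      rw [hsum]
      have hcs := sum_coord_mul_sq_le x fun i => w.ux i x t
      have hg0 := weight_pos x
      have hg1 := weight_le_one x
      have hgx := weight_sq_mul x
      have hgrad := w.gradSq_nonneg x t
      change _ ≤ ‖x‖ ^ 2 * w.gradSq x t at hcs
      unfold fullDens dens
      set g := weight x
      set S := ∑ i, x i * w.ux i x t
      set N := w.gradSq x t
      set a := w.ut x t
      set v := w.u x t
      have h1 : (g * S) ^ 2 ≤ N := by
        have : g ^ 2 * S ^ 2 ≤ g ^ 2 * (‖x‖ ^ 2 * N) :=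
          mul_le_mul_of_nonneg_left hcs (sq_nonneg g)
        nlinarith [mul_nonneg (sq_nonneg g) hgrad]
      have h2 : 2 * g ^ 8 * v * a ≤ a ^ 2 + g ^ 2 * v ^ 2 := by
        have h3 : g ^ 7 ≤ 1 := pow_le_one₀ hg0.le hg1
        have h4 : 0 ≤ g ^ 7 := by positivity
        have h5 : 0 ≤ a ^ 2 + (g * v) ^ 2 := by positivity
        nlinarith [mul_nonneg h4 (sq_nonneg (a - g * v)), mul_le_mul_of_nonneg_right h3 h5]
      have h3 : 16 * g ^ 10 * a * S ≤ 8 * (a ^ 2 + N) := by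
        have h3 : g ^ 9 ≤ 1 := pow_le_one₀ hg0.le hg1
        have h4 : 0 ≤ g ^ 9 := by positivity
        have h5 : 0 ≤ a ^ 2 + (g * S) ^ 2 := by positivity
        nlinarith [mul_nonneg h4 (sq_nonneg (a - g * S)), mul_le_mul_of_nonneg_right h3 h5]
      nlinarith [mul_nonneg (sq_nonneg g) (sq_nonneg v)]
    · have ht0 := h0.trans ht
      refine (integral_cutoff_mul_le ((hw.integrable_fullDens t ht0).const_mul 9)
        (fun x => mul_nonneg (by norm_num) (w.fullDens_nonneg x t)) R).trans ?_
      rw [integral_const_mul]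
      exact mul_le_mul_of_nonneg_left (hw.integral_fullDens_le t hd ht0) (by norm_num)
  refine h.trans (mul_le_mul_of_nonneg_right ?_ (by linarith))
  have h1 : 4 / R ≤ 4 := div_le_self (by norm_num) hR
  have h2 : 4 / R * ((d + 1) * K) ≤ 4 * ((d + 1) * K) :=
    mul_le_mul_of_nonneg_right h1 (by positivity)
  linarith

end WaveJet

/-! ### The Morawetz multiplier -/

/-- The zeroth order coefficient of the Morawetz multiplier. -/
noncomputable def morCoeff (c : ℝ) (x : EuclideanSpace ℝ (Fin d)) : ℝ :=
  (d - 1) / 2 * weight x ^ 1 + 1 / 2 * weight x ^ 3 - c * weight x ^ 5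

/-- The radial derivative of `morCoeff`, divided by the radius. -/
noncomputable def morCoeff' (c : ℝ) (x : EuclideanSpace ℝ (Fin d)) : ℝ :=
  -((d - 1) / 2 * weight x ^ 3) - 3 / 2 * weight x ^ 5 + 5 * c * weight x ^ 7

/-- The radial derivative of `morCoeff'`, divided by the radius. -/
noncomputable def morCoeff'' (c : ℝ) (x : EuclideanSpace ℝ (Fin d)) : ℝ :=
  3 * (d - 1) / 2 * weight x ^ 5 + 15 / 2 * weight x ^ 7 - 35 * c * weight x ^ 9

@[fun_prop]
theorem continuous_morCoeff (c : ℝ) :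
    Continuous (morCoeff c : EuclideanSpace ℝ (Fin d) → ℝ) := by
  unfold morCoeff; fun_prop

@[fun_prop]
theorem continuous_morCoeff' (c : ℝ) :
    Continuous (morCoeff' c : EuclideanSpace ℝ (Fin d) → ℝ) := by
  unfold morCoeff'; fun_prop

@[fun_prop]
theorem continuous_morCoeff'' (c : ℝ) :
    Continuous (morCoeff'' c : EuclideanSpace ℝ (Fin d) → ℝ) := by
  unfold morCoeff''; fun_prop

theorem hasPartial_morCoeff (c : ℝ) (i : Fin d) (x : EuclideanSpace ℝ (Fin d)) :
    HasPartial i (morCoeff c) (x i * morCoeff' c x) x := by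
  have h := (((hasPartial_weight_pow i x 1).const_mul ((d - 1 : ℝ) / 2)).fun_add
    ((hasPartial_weight_pow i x 3).const_mul (1 / 2 : ℝ))).fun_sub
    ((hasPartial_weight_pow i x 5).const_mul c)
  refine h.congr_deriv ?_
  simp only [morCoeff']
  push_cast
  ring

theorem hasPartial_morCoeff' (c : ℝ) (i : Fin d) (x : EuclideanSpace ℝ (Fin d)) :
    HasPartial i (morCoeff' c) (x i * morCoeff'' c x) x := by
  have h := (((hasPartial_weight_pow i x 3).const_mul ((d - 1 : ℝ) / 2)).fun_neg.fun_sub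
    ((hasPartial_weight_pow i x 5).const_mul (3 / 2 : ℝ))).fun_add
    ((hasPartial_weight_pow i x 7).const_mul (5 * c))
  refine h.congr_deriv ?_
  simp only [morCoeff'']
  push_cast
  ring

theorem abs_morCoeff_le (hd : 3 ≤ d) {c : ℝ} (hc0 : 0 ≤ c) (hc1 : c ≤ 1)
    (x : EuclideanSpace ℝ (Fin d)) : |morCoeff c x| ≤ d * weight x := by
  have hd' : (3 : ℝ) ≤ d := by exact_mod_cast hd
  have h0 := (weight_pos x).le
  have h1 := weight_le_one x
  have h3 : weight x ^ 3 ≤ weight x := by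
    simpa using pow_le_pow_of_le_one h0 h1 (show 1 ≤ 3 by norm_num)
  have h5 : weight x ^ 5 ≤ weight x := by
    simpa using pow_le_pow_of_le_one h0 h1 (show 1 ≤ 5 by norm_num)
  have h3' : 0 ≤ weight x ^ 3 := by positivity
  have h5' : 0 ≤ weight x ^ 5 := by positivity
  unfold morCoeff
  rw [abs_le]
  constructor <;> nlinarith

theorem abs_morCoeff'_le (hd : 3 ≤ d) {c : ℝ} (hc0 : 0 ≤ c) (hc1 : c ≤ 1)
    (x : EuclideanSpace ℝ (Fin d)) : |morCoeff' c x| ≤ (d + 5) * weight x ^ 3 := by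
  have hd' : (3 : ℝ) ≤ d := by exact_mod_cast hd
  have h0 := (weight_pos x).le
  have h1 := weight_le_one x
  have h5 : weight x ^ 5 ≤ weight x ^ 3 := pow_le_pow_of_le_one h0 h1 (by norm_num)
  have h7 : weight x ^ 7 ≤ weight x ^ 3 := pow_le_pow_of_le_one h0 h1 (by norm_num)
  have h3' : 0 ≤ weight x ^ 3 := by positivity
  have h5' : 0 ≤ weight x ^ 5 := by positivity
  have h7' : 0 ≤ weight x ^ 7 := by positivity
  unfold morCoeff'
  rw [abs_le]
  constructor <;> nlinarith

namespace WaveJet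

variable (w : WaveJet d) (c : ℝ) (x : EuclideanSpace ℝ (Fin d)) (t : ℝ)

/-- The spatial dilation field applied to a solution. -/
def radial : ℝ := ∑ j, x j * w.ux j x t

/-- The Morawetz multiplier applied to a solution. -/
noncomputable def mor : ℝ := weight x * w.radial x t + morCoeff c x * w.u x t

/-- The flux in the Morawetz identity. -/
noncomputable def morFlux (i : Fin d) : ℝ :=
  w.ux i x t * w.mor c x t + 1 / 2 * (weight x * x i) * (w.ut x t ^ 2 - w.gradSq x t)
    - 1 / 2 * (x i * morCoeff' c x) * w.u x t ^ 2

/-- The partial derivative of the `i`-th flux component in the `i`-th direction. -/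
noncomputable def morFlux' (i : Fin d) : ℝ :=
  w.uxx i i x t * w.mor c x t
    + w.ux i x t * (-(x i) * weight x ^ 3 * w.radial x t
      + weight x * (w.ux i x t + ∑ j, x j * w.uxx j i x t)
      + x i * morCoeff' c x * w.u x t + morCoeff c x * w.ux i x t)
    + 1 / 2 * (weight x - x i ^ 2 * weight x ^ 3) * (w.ut x t ^ 2 - w.gradSq x t)
    + weight x * x i * (w.ut x t * w.uxt i x t - ∑ j, w.ux j x t * w.uxx j i x t)
    - 1 / 2 * (morCoeff' c x + x i ^ 2 * morCoeff'' c x) * w.u x t ^ 2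
    - x i * morCoeff' c x * w.u x t * w.ux i x t

@[fun_prop]
theorem continuous_mor {X : Type*} [TopologicalSpace X] {f : X → EuclideanSpace ℝ (Fin d)}
    {g : X → ℝ} (hf : Continuous f) (hg : Continuous g) :
    Continuous fun z => w.mor c (f z) (g z) := by
  unfold mor radial; fun_prop

theorem hasPartial_radial (i : Fin d) : HasPartial i (fun y => w.radial y t)
    (w.ux i x t + ∑ j, x j * w.uxx j i x t) x := by
  have h : HasPartial i (fun y => ∑ j, y j * w.ux j y t) _ x :=
    HasDerivAt.fun_sum fun j _ => (hasPartial_coord i j x).fun_mul (w.partial_ux j i x t)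
  refine h.congr_deriv ?_
  simp [Finset.sum_add_distrib]

theorem hasPartial_gradSq (i : Fin d) : HasPartial i (fun y => w.gradSq y t)
    (2 * ∑ j, w.ux j x t * w.uxx j i x t) x := by
  have h : HasPartial i (fun y => ∑ j, w.ux j y t ^ 2) _ x :=
    HasDerivAt.fun_sum fun j _ => (w.partial_ux j i x t).fun_pow 2
  refine h.congr_deriv ?_
  rw [Finset.mul_sum]
  refine Finset.sum_congr rfl fun j _ => ?_
  simp
  ring

theorem hasPartial_morFlux (i : Fin d) :
    HasPartial i (fun y => w.morFlux c y t i) (w.morFlux' c x t i) x := by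
  have hmor := ((hasPartial_weight i x).fun_mul (w.hasPartial_radial x t i)).fun_add
    ((hasPartial_morCoeff c i x).fun_mul (w.partial_u i x t))
  have h1 := (w.partial_ux i i x t).fun_mul hmor
  have h2 := (((hasPartial_weight i x).fun_mul (hasPartial_coord i i x)).const_mul
    (1 / 2 : ℝ)).fun_mul (((w.partial_ut i x t).fun_pow 2).fun_sub (w.hasPartial_gradSq x t i))
  have h3 := (((hasPartial_coord i i x).fun_mul (hasPartial_morCoeff' c i x)).const_mul
    (1 / 2 : ℝ)).fun_mul ((w.partial_u i x t).fun_pow 2)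
  refine ((h1.fun_add h2).fun_sub h3).congr_deriv ?_
  simp only [zero_smul, add_zero, if_true, morFlux', mor]
  push_cast
  ring

theorem sum_morFlux' : ∑ i, w.morFlux' c x t i =
    (∑ i, w.uxx i i x t) * w.mor c x t
      + w.ut x t * weight x * (∑ i, x i * w.uxt i x t)
      - weight x ^ 3 * w.radial x t ^ 2 + (weight x + morCoeff c x) * w.gradSq x t
      + 1 / 2 * (d * weight x - ‖x‖ ^ 2 * weight x ^ 3) * (w.ut x t ^ 2 - w.gradSq x t)
      - 1 / 2 * (d * morCoeff' c x + ‖x‖ ^ 2 * morCoeff'' c x) * w.u x t ^ 2 := by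
  have hsymm : ∑ i, w.ux i x t * ∑ j, x j * w.uxx j i x t
      = ∑ i, x i * ∑ j, w.ux j x t * w.uxx j i x t := by
    simp only [Finset.mul_sum]
    rw [Finset.sum_comm]
    refine Finset.sum_congr rfl fun i _ => Finset.sum_congr rfl fun j _ => ?_
    rw [w.symm i j]
    ring
  have h : ∀ i, w.morFlux' c x t i =
      w.uxx i i x t * w.mor c x t - weight x ^ 3 * w.radial x t * (x i * w.ux i x t)
      + (weight x + morCoeff c x) * w.ux i x t ^ 2
      + weight x * (w.ux i x t * ∑ j, x j * w.uxx j i x t)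
      + 1 / 2 * weight x * (w.ut x t ^ 2 - w.gradSq x t)
      - 1 / 2 * weight x ^ 3 * (w.ut x t ^ 2 - w.gradSq x t) * x i ^ 2
      + w.ut x t * weight x * (x i * w.uxt i x t)
      - weight x * (x i * ∑ j, w.ux j x t * w.uxx j i x t)
      - 1 / 2 * morCoeff' c x * w.u x t ^ 2
      - 1 / 2 * morCoeff'' c x * w.u x t ^ 2 * x i ^ 2 := fun i => by
    unfold morFlux'
    ring
  simp only [h, Finset.sum_add_distrib, Finset.sum_sub_distrib, ← Finset.mul_sum,
    ← Finset.sum_mul, Finset.sum_const, Finset.card_univ, Fintype.card_fin, nsmul_eq_mul, hsymm]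
  rw [← EuclideanSpace.real_norm_sq_eq]
  unfold radial gradSq
  ring

theorem weight_mul_radial_sq_le : (weight x * w.radial x t) ^ 2 ≤ w.gradSq x t := by
  have h1 := sum_coord_mul_sq_le x fun i => w.ux i x t
  have h2 := weight_sq_mul x
  have h3 := w.gradSq_nonneg x t
  change w.radial x t ^ 2 ≤ ‖x‖ ^ 2 * w.gradSq x t at h1
  have h4 := mul_le_mul_of_nonneg_left h1 (sq_nonneg (weight x))
  nlinarith [mul_nonneg (sq_nonneg (weight x)) h3]

theorem mor_sq_le (hd : 3 ≤ d) {c : ℝ} (hc0 : 0 ≤ c) (hc1 : c ≤ 1) :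
    w.mor c x t ^ 2 ≤ 2 * w.gradSq x t + 2 * d ^ 2 * (weight x ^ 2 * w.u x t ^ 2) := by
  have h1 := w.weight_mul_radial_sq_le x t
  have h2 : morCoeff c x ^ 2 ≤ (d * weight x) ^ 2 :=
    sq_le_sq' (by linarith [(abs_le.1 (abs_morCoeff_le hd hc0 hc1 x)).1])
      (abs_le.1 (abs_morCoeff_le hd hc0 hc1 x)).2
  have h3 := mul_le_mul_of_nonneg_right h2 (sq_nonneg (w.u x t))
  unfold mor
  nlinarith [sq_nonneg (weight x * w.radial x t - morCoeff c x * w.u x t)]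

theorem abs_ut_mul_mor_le (hd : 3 ≤ d) {c : ℝ} (hc0 : 0 ≤ c) (hc1 : c ≤ 1) :
    |w.ut x t * w.mor c x t| ≤ d ^ 2 * w.fullDens x t := by
  have h1 := w.mor_sq_le x t hd hc0 hc1
  have h2 := w.gradSq_nonneg x t
  have h3 : 0 ≤ weight x ^ 2 * w.u x t ^ 2 := by positivity
  have hd' : (9 : ℝ) ≤ d ^ 2 := by
    have : (3 : ℝ) ≤ d := by exact_mod_cast hd
    nlinarith
  have h4 : |w.ut x t * w.mor c x t| ≤ (w.ut x t ^ 2 + w.mor c x t ^ 2) / 2 := by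
    rw [abs_le]
    constructor <;> nlinarith [sq_nonneg (w.ut x t + w.mor c x t),
      sq_nonneg (w.ut x t - w.mor c x t)]
  unfold fullDens dens
  nlinarith [mul_le_mul_of_nonneg_right hd' h2,
    mul_le_mul_of_nonneg_right hd' (sq_nonneg (w.ut x t))]

theorem sum_abs_morFlux_le (hd : 3 ≤ d) {c : ℝ} (hc0 : 0 ≤ c) (hc1 : c ≤ 1) :
    ∑ i, |w.morFlux c x t i| ≤ (d * (d ^ 2 + d + 8) + 1) * w.fullDens x t := by
  have h1 := w.mor_sq_le x t hd hc0 hc1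
  have h2 := w.gradSq_nonneg x t
  have h3 : 0 ≤ weight x ^ 2 * w.u x t ^ 2 := by positivity
  have h0 := weight_pos x
  set P := weight x ^ 2 * w.u x t ^ 2 with hP
  have hi : ∀ i, |w.morFlux c x t i| ≤ 1 / 2 * w.ux i x t ^ 2
      + (3 / 2 * w.gradSq x t + d ^ 2 * P + 1 / 2 * w.ut x t ^ 2 + 1 / 2 * ((d + 5) * P)) :=
    fun i => by
    have hx := weight_mul_abs_coord_le x i
    have h5 : |w.ux i x t * w.mor c x t| ≤ 1 / 2 * w.ux i x t ^ 2 + 1 / 2 * w.mor c x t ^ 2 := by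
      rw [abs_le]
      constructor <;> nlinarith [sq_nonneg (w.ux i x t + w.mor c x t),
        sq_nonneg (w.ux i x t - w.mor c x t)]
    have h6 : |1 / 2 * (weight x * x i) * (w.ut x t ^ 2 - w.gradSq x t)|
        ≤ 1 / 2 * (w.ut x t ^ 2 + w.gradSq x t) := by
      rw [abs_mul, abs_mul, abs_mul, abs_of_pos h0, abs_of_pos (by norm_num : (0 : ℝ) < 1 / 2)]
      have h7 : |w.ut x t ^ 2 - w.gradSq x t| ≤ w.ut x t ^ 2 + w.gradSq x t := by
        rw [abs_le]
        constructor <;> nlinarith [sq_nonneg (w.ut x t)]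
      have h8 := mul_le_mul hx h7 (abs_nonneg _) zero_le_one
      linarith
    have h7 : |1 / 2 * (x i * morCoeff' c x) * w.u x t ^ 2| ≤ 1 / 2 * ((d + 5) * P) := by
      rw [abs_mul, abs_mul, abs_mul, abs_of_pos (by norm_num : (0 : ℝ) < 1 / 2),
        abs_of_nonneg (sq_nonneg (w.u x t))]
      have h8 : |x i| * |morCoeff' c x| ≤ (d + 5) * weight x ^ 2 := by
        calc |x i| * |morCoeff' c x| ≤ |x i| * ((d + 5) * weight x ^ 3) :=
              mul_le_mul_of_nonneg_left (abs_morCoeff'_le hd hc0 hc1 x) (abs_nonneg _)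
          _ = (weight x * |x i|) * ((d + 5) * weight x ^ 2) := by ring
          _ ≤ 1 * ((d + 5) * weight x ^ 2) := mul_le_mul_of_nonneg_right hx (by positivity)
          _ = (d + 5) * weight x ^ 2 := one_mul _
      have h9 := mul_le_mul_of_nonneg_right h8 (sq_nonneg (w.u x t))
      rw [hP]
      linarith
    unfold morFlux
    refine (abs_sub _ _).trans ?_
    have h10 := abs_add_le (w.ux i x t * w.mor c x t)
      (1 / 2 * (weight x * x i) * (w.ut x t ^ 2 - w.gradSq x t))
    linarith
  refine (Finset.sum_le_sum fun i _ => hi i).trans ?_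
  rw [Finset.sum_add_distrib, ← Finset.mul_sum, Finset.sum_const, Finset.card_univ,
    Fintype.card_fin, nsmul_eq_mul]
  change 1 / 2 * w.gradSq x t + _ ≤ _
  unfold fullDens dens
  rw [← hP]
  have hd0 : (0 : ℝ) ≤ d := Nat.cast_nonneg d
  have ha := sq_nonneg (w.ut x t)
  have e1 := mul_nonneg hd0 h2
  have e2 := mul_nonneg hd0 ha
  have e3 := mul_nonneg hd0 h3
  have e4 := mul_nonneg hd0 e1
  have e5 := mul_nonneg hd0 e2
  have e6 := mul_nonneg hd0 e3
  have e7 := mul_nonneg hd0 e4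
  have e8 := mul_nonneg hd0 e5
  have e9 := mul_nonneg hd0 e6
  nlinarith

theorem morawetz_pointwise (hd : 3 ≤ d) {c : ℝ} (hc : c = 1 / (5 * d)) :
    (∑ i, w.uxx i i x t) * w.mor c x t
      + w.ut x t * (weight x * (∑ i, x i * w.uxt i x t) + morCoeff c x * w.ut x t)
      ≤ ∑ i, w.morFlux' c x t i + -(c * w.localDens x t) := by
  rw [sum_morFlux']
  have hd' : (3 : ℝ) ≤ d := by exact_mod_cast hd
  have hcd : c * d = 1 / 5 := by rw [hc]; field_simp
  have hc0 : 0 < c := by rw [hc]; positivity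
  have hc1 : c ≤ 1 / 15 := by nlinarith
  have h0 := weight_pos x
  have h1 := weight_le_one x
  have hr : ‖x‖ ^ 2 * weight x ^ 2 = 1 - weight x ^ 2 := by linarith [weight_sq_mul x]
  have hrad := sum_coord_mul_sq_le x fun i => w.ux i x t
  change w.radial x t ^ 2 ≤ ‖x‖ ^ 2 * w.gradSq x t at hrad
  have hN := w.gradSq_nonneg x t
  unfold localDens dens morCoeff morCoeff' morCoeff''
  set g := weight x
  set S := w.radial x t
  set N := w.gradSq x t
  set a := w.ut x t
  set v := w.u x t
  set r := ‖x‖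
  have hS : g ^ 3 * S ^ 2 ≤ (g - g ^ 3) * N := by
    calc g ^ 3 * S ^ 2 ≤ g ^ 3 * (r ^ 2 * N) := mul_le_mul_of_nonneg_left hrad (by positivity)
      _ = (g - g ^ 3) * N := by linear_combination g * N * hr
  have e3 : r ^ 2 * g ^ 3 = g - g ^ 3 := by linear_combination g * hr
  have e5 : r ^ 2 * g ^ 5 = g ^ 3 - g ^ 5 := by linear_combination g ^ 3 * hr
  have e7 : r ^ 2 * g ^ 7 = g ^ 5 - g ^ 7 := by linear_combination g ^ 5 * hr
  have e9 : r ^ 2 * g ^ 9 = g ^ 7 - g ^ 9 := by linear_combination g ^ 7 * hr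
  have p3 : 0 < g ^ 3 := by positivity
  have p5 : 0 < g ^ 5 := by positivity
  have p7 : 0 < g ^ 7 := by positivity
  have q85 : g ^ 8 ≤ g ^ 5 := pow_le_pow_of_le_one h0.le h1 (by norm_num)
  have q53 : g ^ 5 ≤ g ^ 3 := pow_le_pow_of_le_one h0.le h1 (by norm_num)
  have q97 : g ^ 9 ≤ g ^ 7 := pow_le_pow_of_le_one h0.le h1 (by norm_num)
  have q87 : g ^ 8 ≤ g ^ 7 := pow_le_pow_of_le_one h0.le h1 (by norm_num)
  have hcoeffN : 0 ≤ g ^ 3 - c * g ^ 5 - c * g ^ 8 := by nlinarith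
  have hcoeffv : 0 ≤ (d - 1) * (d - 3) / 4 * g ^ 3 + (3 * d - 9) / 2 * g ^ 5
      + (13 / 4 + 35 / 2 * c) * g ^ 7 - 35 / 2 * c * g ^ 9 - c * g ^ 8 := by
    have h3 : 0 ≤ (d - 1) * (d - 3) / 4 * g ^ 3 :=
      mul_nonneg (div_nonneg (mul_nonneg (by linarith) (by linarith)) (by norm_num)) p3.le
    have h5 : 0 ≤ (3 * d - 9) / 2 * g ^ 5 := mul_nonneg (by linarith) p5.le
    nlinarith
  have hna := mul_nonneg (mul_nonneg hc0.le (sub_nonneg.2 q85)) (sq_nonneg a)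
  have hnN := mul_nonneg hcoeffN hN
  have hnv := mul_nonneg hcoeffv (sq_nonneg v)
  refine le_of_sub_nonneg ?_
  refine (add_nonneg (add_nonneg (add_nonneg hna hnN) hnv) (sub_nonneg.2 hS)).trans_eq ?_
  linear_combination (a ^ 2 - N) / 2 * e3 + 3 * (d - 1) / 4 * v ^ 2 * e5 + 15 / 4 * v ^ 2 * e7
    - 35 / 2 * c * v ^ 2 * e9 + 5 / 2 * g ^ 7 * v ^ 2 * hcd

end WaveJet

namespace WaveJet

variable {w : WaveJet d} {K : ℝ}

/-! ### Decay of the local energy -/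

theorem hasDerivAt_ut_mul_mor (w : WaveJet d) (c : ℝ) (x : EuclideanSpace ℝ (Fin d)) (t : ℝ) :
    HasDerivAt (fun s => w.ut x s * w.mor c x s) ((∑ i, w.uxx i i x t) * w.mor c x t
      + w.ut x t * (weight x * (∑ i, x i * w.uxt i x t) + morCoeff c x * w.ut x t)) t := by
  have h : HasDerivAt (fun s => w.radial x s) (∑ i, x i * w.uxt i x t) t :=
    HasDerivAt.fun_sum fun i _ => (w.deriv_ux i x t).const_mul (x i)
  exact (w.deriv_ut x t).fun_mul ((h.const_mul _).fun_add ((w.deriv_u x t).const_mul _))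

theorem FiniteEnergy.integrable_ut_mul_mor (hd : 3 ≤ d) {c : ℝ} (hc0 : 0 ≤ c) (hc1 : c ≤ 1)
    (hw : w.FiniteEnergy K) {t : ℝ} (ht : 0 ≤ t) : Integrable fun x => w.ut x t * w.mor c x t :=
  ((hw.integrable_fullDens t ht).const_mul (d ^ 2 : ℝ)).mono' (by fun_prop)
    (Eventually.of_forall fun x => w.abs_ut_mul_mor_le x t hd hc0 hc1)

theorem FiniteEnergy.abs_integral_ut_mul_mor_le (hd : 3 ≤ d) {c : ℝ} (hc0 : 0 ≤ c) (hc1 : c ≤ 1)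
    (hw : w.FiniteEnergy K) {t : ℝ} (ht : 0 ≤ t) :
    |∫ x, w.ut x t * w.mor c x t| ≤ d ^ 2 * (5 * K) := by
  refine (norm_integral_le_of_norm_le (f := fun x => w.ut x t * w.mor c x t)
    ((hw.integrable_fullDens t ht).const_mul (d ^ 2 : ℝ))
    (Eventually.of_forall fun x => w.abs_ut_mul_mor_le x t hd hc0 hc1)).trans ?_
  rw [integral_const_mul]
  exact mul_le_mul_of_nonneg_left (hw.integral_fullDens_le t hd ht) (by positivity)

/-- The integrated Morawetz estimate. -/
theorem FiniteEnergy.integral_ut_mul_mor_sub_le (hd : 3 ≤ d) {c : ℝ} (hc : c = 1 / (5 * d))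
    (hw : w.FiniteEnergy K) {t₁ t₂ γ : ℝ} (h0 : 0 ≤ t₁) (h12 : t₁ ≤ t₂)
    (hγ : ∀ᶠ R : ℝ in atTop, ∀ t, t₁ ≤ t → t ≤ t₂ → γ ≤ ∫ x, cutoff R x * w.localDens x t) :
    (∫ x, w.ut x t₂ * w.mor c x t₂) - ∫ x, w.ut x t₁ * w.mor c x t₁
      ≤ -(c * γ) * (t₂ - t₁) := by
  have hd' : (3 : ℝ) ≤ d := by exact_mod_cast hd
  have hc0 : 0 ≤ c := by rw [hc]; positivity
  have hc1 : c ≤ 1 := by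
    rw [hc, div_le_one (by positivity)]
    linarith
  set A : ℝ := d * (d ^ 2 + d + 8) + 1
  have key : ∀ R : ℝ, 0 < R →
      (∀ t, t₁ ≤ t → t ≤ t₂ → γ ≤ ∫ x, cutoff R x * w.localDens x t) →
      (∫ x, cutoff R x * (w.ut x t₂ * w.mor c x t₂))
        - ∫ x, cutoff R x * (w.ut x t₁ * w.mor c x t₁)
        ≤ (-(c * γ) + 4 / R * (A * (5 * K))) * (t₂ - t₁) := fun R hR hRγ => by
    refine integral_cutoff_mul_sub_le hR (e := fun x t => w.ut x t * w.mor c x t)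
      (e' := fun x t => (∑ i, w.uxx i i x t) * w.mor c x t
        + w.ut x t * (weight x * (∑ i, x i * w.uxt i x t) + morCoeff c x * w.ut x t))
      (F := fun i x t => w.morFlux c x t i) (F' := fun i x t => w.morFlux' c x t i)
      (G := fun x t => -(c * w.localDens x t)) (H := fun x t => A * w.fullDens x t)
      (by simp only [Function.uncurry_def]; fun_prop)
      (by simp only [Function.uncurry_def]; fun_prop)
      (fun x t => w.hasDerivAt_ut_mul_mor c x t)
      (fun i => by simp only [Function.uncurry_def, morFlux]; fun_prop)
      (fun i => by simp only [Function.uncurry_def, morFlux', radial]; fun_prop)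
      (fun i x t => w.hasPartial_morFlux c x t i)
      (by simp only [Function.uncurry_def]; fun_prop)
      (fun t ht => (hw.integrable_fullDens t ht).const_mul _) (fun t ht => ?_)
      (fun x t => w.sum_abs_morFlux_le x t hd hc0 hc1)
      (fun x t => w.morawetz_pointwise x t hd hc) h0 h12 (fun t ht1 ht2 => ?_)
    · rw [integral_const_mul]
      exact mul_le_mul_of_nonneg_left (hw.integral_fullDens_le t hd ht) (by positivity)
    · have h : ∫ x, cutoff R x * -(c * w.localDens x t)
          = -(c * ∫ x, cutoff R x * w.localDens x t) := by
        rw [← integral_const_mul, ← integral_neg]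
        exact integral_congr_ae (Eventually.of_forall fun x => by ring)
      rw [h]
      exact neg_le_neg (mul_le_mul_of_nonneg_left (hRγ t ht1 ht2) hc0)
  have hlim : Tendsto (fun R : ℝ => (-(c * γ) + 4 / R * (A * (5 * K))) * (t₂ - t₁)) atTop
      (nhds ((-(c * γ) + 0 * (A * (5 * K))) * (t₂ - t₁))) :=
    (((tendsto_id.const_div_atTop 4).mul_const _).const_add _).mul_const _
  have h := le_of_tendsto_of_tendsto
    ((tendsto_integral_cutoff_mul (hw.integrable_ut_mul_mor hd hc0 hc1 (h0.trans h12))).sub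
      (tendsto_integral_cutoff_mul (hw.integrable_ut_mul_mor hd hc0 hc1 h0))) hlim
    (((eventually_gt_atTop 0).and hγ).mono fun R hR => key R hR.1 hR.2)
  simpa using h

/-- The local energy of a solution of finite energy tends to zero. -/
theorem FiniteEnergy.tendsto_integral_localDens (hd : 3 ≤ d) (hw : w.FiniteEnergy K) :
    Tendsto (fun t => ∫ x, w.localDens x t) atTop (nhds 0) := by
  have hd' : (3 : ℝ) ≤ d := by exact_mod_cast hd
  obtain ⟨c, hc⟩ : ∃ c : ℝ, c = 1 / (5 * d) := ⟨_, rfl⟩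
  have hc0 : 0 < c := by rw [hc]; positivity
  have hc1 : c ≤ 1 := by
    rw [hc, div_le_one (by positivity)]
    linarith
  set M : ℝ → ℝ := fun t => ∫ x, w.ut x t * w.mor c x t with hM
  have hanti : ∀ t₁ t₂, 0 ≤ t₁ → t₁ ≤ t₂ → M t₂ ≤ M t₁ := fun t₁ t₂ h0 h12 => by
    have h := hw.integral_ut_mul_mor_sub_le hd hc h0 h12 (γ := 0)
      (Eventually.of_forall fun R t _ _ => integral_nonneg fun x =>
        mul_nonneg (cutoff_nonneg R x) (w.localDens_nonneg x t))
    simp only [mul_zero, neg_zero, zero_mul] at h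
    exact sub_nonpos.1 h
  have hbdd : ∀ t, 0 ≤ t → -(d ^ 2 * (5 * K)) ≤ M t := fun t ht =>
    (abs_le.1 (hw.abs_integral_ut_mul_mor_le hd hc0.le hc1 ht)).1
  obtain ⟨L, hL⟩ : ∃ L, Tendsto M atTop (nhds L) := by
    have h1 : Antitone fun t => M (max t 0) := fun s t hst =>
      hanti _ _ (le_max_right _ _) (max_le_max_right 0 hst)
    refine ⟨_, (tendsto_atTop_ciInf h1 ⟨-(d ^ 2 * (5 * K)), ?_⟩).congr' ?_⟩
    · rintro _ ⟨t, rfl⟩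
      exact hbdd _ (le_max_right _ _)
    · filter_upwards [eventually_ge_atTop 0] with t ht
      rw [max_eq_left ht]
  obtain ⟨C, hC0, hC⟩ := hw.integral_cutoff_localDens_sub_le hd
  refine tendsto_order.2 ⟨fun a ha => Eventually.of_forall fun t =>
    ha.trans_le (integral_nonneg fun x => w.localDens_nonneg x t), fun ε hε => ?_⟩
  set δ := ε / 2 with hδ
  have hδ0 : 0 < δ := by positivity
  set η := δ / (2 * C) with hη
  have hη0 : 0 < η := by positivity
  have hCη : C * η = δ / 2 := by rw [hη]; field_simp
  have hdiff : Tendsto (fun t => M (t - η) - M t) atTop (nhds (L - L)) :=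
    (hL.comp (tendsto_atTop_add_const_right atTop (-η) tendsto_id)).sub hL
  rw [sub_self] at hdiff
  filter_upwards [hdiff.eventually_lt_const (show 0 < c * δ * η by positivity),
    eventually_ge_atTop η] with t ht htη
  by_contra! hcon
  have ht0 : 0 ≤ t := hη0.le.trans htη
  have hlarge := (tendsto_integral_cutoff_mul (hw.integrable_localDens t ht0)).eventually_const_lt
    (show 3 / 2 * δ < _ from lt_of_lt_of_le (by rw [hδ]; linarith) hcon)
  have h := hw.integral_ut_mul_mor_sub_le hd hc (sub_nonneg.2 htη) (sub_le_self t hη0.le) (γ := δ)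
    (by
      filter_upwards [hlarge, eventually_ge_atTop 1] with R hR hR1 s hs1 hs2
      have h1 := hC R hR1 s t (by linarith) hs2
      have h2 : C * (t - s) ≤ C * η := mul_le_mul_of_nonneg_left (by linarith) hC0.le
      linarith)
  have h' : M t - M (t - η) ≤ -(c * δ) * (t - (t - η)) := h
  have : -(c * δ) * (t - (t - η)) = -(c * δ * η) := by ring
  linarith

end WaveJet

theorem one_le_mul_weight_pow {R : ℝ} {x : EuclideanSpace ℝ (Fin d)} (hx : ‖x‖ ≤ R) :
    1 ≤ (1 + R ^ 2) ^ 4 * weight x ^ 8 := by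
  have h1 := weight_sq_mul x
  have h2 : ‖x‖ ^ 2 ≤ R ^ 2 := pow_le_pow_left₀ (norm_nonneg x) hx 2
  have h3 : 1 ≤ (1 + R ^ 2) * weight x ^ 2 := by nlinarith [sq_nonneg (weight x)]
  calc (1 : ℝ) ≤ ((1 + R ^ 2) * weight x ^ 2) ^ 4 := one_le_pow₀ h3
    _ = (1 + R ^ 2) ^ 4 * weight x ^ 8 := by ring

namespace WaveJet

variable {w v : WaveJet d} {K K' : ℝ}

/-! ### Combinations and translates of solutions -/

theorem dens_comb_le (α β : ℝ) (w v : WaveJet d) (x : EuclideanSpace ℝ (Fin d)) (t : ℝ) :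
    (comb α β w v).dens x t ≤ 2 * α ^ 2 * w.dens x t + 2 * β ^ 2 * v.dens x t := by
  have h : ∀ a b : ℝ, (α * a + β * b) ^ 2 ≤ 2 * α ^ 2 * a ^ 2 + 2 * β ^ 2 * b ^ 2 := fun a b => by
    nlinarith [sq_nonneg (α * a - β * b)]
  have h1 : (comb α β w v).gradSq x t ≤ 2 * α ^ 2 * w.gradSq x t + 2 * β ^ 2 * v.gradSq x t := by
    unfold gradSq
    rw [Finset.mul_sum, Finset.mul_sum, ← Finset.sum_add_distrib]
    exact Finset.sum_le_sum fun i _ => h _ _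
  have h2 : (comb α β w v).ut x t ^ 2 ≤ 2 * α ^ 2 * w.ut x t ^ 2 + 2 * β ^ 2 * v.ut x t ^ 2 :=
    h _ _
  unfold dens
  linarith

theorem FiniteEnergy.comb (α β : ℝ) (hw : w.FiniteEnergy K) (hv : v.FiniteEnergy K') :
    (WaveJet.comb α β w v).FiniteEnergy (2 * α ^ 2 * K + 2 * β ^ 2 * K') := by
  have hint : ∀ t, 0 ≤ t → Integrable fun x => 2 * α ^ 2 * w.dens x t + 2 * β ^ 2 * v.dens x t :=
    fun t ht => ((hw.integrable_dens t ht).const_mul _).add ((hv.integrable_dens t ht).const_mul _)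
  have hdens : ∀ t, 0 ≤ t → Integrable fun x => (WaveJet.comb α β w v).dens x t := fun t ht =>
    (hint t ht).mono' (by fun_prop) (Eventually.of_forall fun x => by
      rw [Real.norm_of_nonneg (dens_nonneg _ x t)]
      exact dens_comb_le α β w v x t)
  refine ⟨hdens, fun t ht => ?_, fun t ht => ?_⟩
  · refine (integral_mono (hdens t ht) (hint t ht) fun x => dens_comb_le α β w v x t).trans ?_
    rw [integral_add ((hw.integrable_dens t ht).const_mul _)
      ((hv.integrable_dens t ht).const_mul _), integral_const_mul, integral_const_mul]
    exact add_le_add (mul_le_mul_of_nonneg_left (hw.integral_dens_le t ht) (by positivity))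
      (mul_le_mul_of_nonneg_left (hv.integral_dens_le t ht) (by positivity))
  · refine (((hw.integrable_sq t ht).const_mul (2 * α ^ 2)).add
      ((hv.integrable_sq t ht).const_mul (2 * β ^ 2))).mono' (by fun_prop)
      (Eventually.of_forall fun x => ?_)
    rw [Real.norm_of_nonneg (by positivity)]
    have h : (α * w.u x t + β * v.u x t) ^ 2
        ≤ 2 * α ^ 2 * w.u x t ^ 2 + 2 * β ^ 2 * v.u x t ^ 2 := by
      nlinarith [sq_nonneg (α * w.u x t - β * v.u x t)]
    calc weight x ^ 2 * (α * w.u x t + β * v.u x t) ^ 2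
        ≤ weight x ^ 2 * (2 * α ^ 2 * w.u x t ^ 2 + 2 * β ^ 2 * v.u x t ^ 2) :=
          mul_le_mul_of_nonneg_left h (sq_nonneg _)
      _ = 2 * α ^ 2 * (weight x ^ 2 * w.u x t ^ 2) + 2 * β ^ 2 * (weight x ^ 2 * v.u x t ^ 2) := by
          ring

theorem FiniteEnergy.shift (hw : w.FiniteEnergy K) {s : ℝ} (hs : 0 ≤ s) :
    (WaveJet.shift s w).FiniteEnergy K :=
  ⟨fun t ht => hw.integrable_dens (t + s) (add_nonneg ht hs),
    fun t ht => hw.integral_dens_le (t + s) (add_nonneg ht hs),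
    fun t ht => hw.integrable_sq (t + s) (add_nonneg ht hs)⟩

/-- The time increments of a solution of finite energy are square integrable. -/
theorem integral_sq_sub_le (hint : ∀ t, 0 ≤ t → Integrable fun x => w.dens x t)
    (hle : ∀ t, 0 ≤ t → ∫ x, w.dens x t ≤ K) {t s : ℝ} (ht : 0 ≤ t) (hs : 0 ≤ s) :
    Integrable (fun x => (w.u x (t + s) - w.u x t) ^ 2) ∧
      ∫ x, (w.u x (t + s) - w.u x t) ^ 2 ≤ exp s * (K * s) := by
  have key : ∀ R : ℝ, 0 < R → ∫ x, cutoff R x * (w.u x (t + s) - w.u x t) ^ 2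
      ≤ exp s * (K * s) := fun R hR => by
    have h := integral_cutoff_mul_sub_le (d := d) hR
      (e := fun x τ => exp (-τ) * (w.u x (t + τ) - w.u x t) ^ 2)
      (e' := fun x τ => exp (-τ) * (2 * (w.u x (t + τ) - w.u x t) * w.ut x (t + τ)
        - (w.u x (t + τ) - w.u x t) ^ 2))
      (F := fun _ _ _ => 0) (F' := fun _ _ _ => 0)
      (G := fun x τ => exp (-τ) * w.ut x (t + τ) ^ 2) (H := fun _ _ => 0) (K := 0) (γ := K)
      (by simp only [Function.uncurry_def]; fun_prop)
      (by simp only [Function.uncurry_def]; fun_prop)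
      (fun x τ => ?_) (fun i => continuous_const) (fun i => continuous_const)
      (fun i x τ => hasDerivAt_const _ _) (by simp only [Function.uncurry_def]; fun_prop)
      (fun _ _ => integrable_zero _ _ _) (fun _ _ => by simp) (fun x τ => by simp)
      (fun x τ => ?_) le_rfl hs (fun τ hτ _ => ?_)
    · have h1 : ∫ x, cutoff R x * (exp (-s) * (w.u x (t + s) - w.u x t) ^ 2)
          = exp (-s) * ∫ x, cutoff R x * (w.u x (t + s) - w.u x t) ^ 2 := by
        rw [← integral_const_mul]
        exact integral_congr_ae (Eventually.of_forall fun x => by ring)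
      simp only [h1, add_zero, sub_self, ne_eq, OfNat.ofNat_ne_zero, not_false_eq_true, zero_pow,
        mul_zero, integral_zero, sub_zero] at h
      have h2 := mul_le_mul_of_nonneg_left h (exp_pos s).le
      rwa [← mul_assoc, ← exp_add, add_neg_cancel, exp_zero, one_mul] at h2
    · have h1 : HasDerivAt (fun τ => w.u x (t + τ)) (w.ut x (t + τ)) τ :=
        (w.deriv_u x (t + τ)).comp_const_add t τ
      have h2 := ((hasDerivAt_id τ).fun_neg.exp).fun_mul ((h1.sub_const (w.u x t)).fun_pow 2)
      refine h2.congr_deriv ?_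
      push_cast
      simp only [id]
      ring
    · rw [Finset.sum_const_zero, zero_add]
      refine mul_le_mul_of_nonneg_left ?_ (exp_pos _).le
      nlinarith [sq_nonneg (w.u x (t + τ) - w.u x t - w.ut x (t + τ))]
    · refine le_trans ?_ (hle (t + τ) (add_nonneg ht hτ))
      refine integral_mono (integrable_cutoff_mul hR (by fun_prop))
        (hint (t + τ) (add_nonneg ht hτ)) fun x => ?_
      have h1 : exp (-τ) ≤ 1 := exp_le_one_iff.2 (by linarith)
      calc cutoff R x * (exp (-τ) * w.ut x (t + τ) ^ 2) ≤ 1 * (1 * w.ut x (t + τ) ^ 2) := by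
            gcongr
            exact cutoff_le_one R x
        _ ≤ w.dens x (t + τ) := by
            unfold dens
            linarith [w.gradSq_nonneg x (t + τ)]
  refine integrable_of_tendsto_of_integral_le
    (F := fun R x => cutoff R x * (w.u x (t + s) - w.u x t) ^ 2)
    (by fun_prop) (fun x => sq_nonneg _)
    ((eventually_gt_atTop 0).mono fun R hR => integrable_cutoff_mul hR (by fun_prop))
    (Eventually.of_forall fun R x => mul_nonneg (cutoff_nonneg R x) (sq_nonneg _))
    ((eventually_gt_atTop 0).mono key) (Eventually.of_forall fun x => ?_)
  simpa using (tendsto_cutoff x).mul_const ((w.u x (t + s) - w.u x t) ^ 2)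

/-- A solution with bounded energy that is in the Hardy space at the initial time has finite
energy. -/
theorem finiteEnergy_of_integrable_sq (hint : ∀ t, 0 ≤ t → Integrable fun x => w.dens x t)
    (hle : ∀ t, 0 ≤ t → ∫ x, w.dens x t ≤ K)
    (h0 : Integrable fun x => weight x ^ 2 * w.u x 0 ^ 2) : w.FiniteEnergy K := by
  refine ⟨hint, hle, fun t ht => ?_⟩
  have h1 := (integral_sq_sub_le hint hle le_rfl ht).1
  simp only [zero_add] at h1
  refine ((h0.const_mul 2).add (h1.const_mul 2)).mono' (by fun_prop)
    (Eventually.of_forall fun x => ?_)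
  rw [Real.norm_of_nonneg (by positivity)]
  have h2 : weight x ^ 2 ≤ 1 := pow_le_one₀ (weight_pos x).le (weight_le_one x)
  have h3 := mul_le_mul_of_nonneg_right h2 (sq_nonneg (w.u x t - w.u x 0))
  have h4 : weight x ^ 2 * w.u x t ^ 2
      ≤ weight x ^ 2 * (2 * w.u x 0 ^ 2 + 2 * (w.u x t - w.u x 0) ^ 2) :=
    mul_le_mul_of_nonneg_left (by nlinarith [sq_nonneg (w.u x t - 2 * w.u x 0)]) (sq_nonneg _)
  simp only [Pi.add_apply]
  linarith

/-! ### Averaging in time -/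

theorem four_mul_dens_average_le {η : ℝ} (hη : 0 < η) {R : ℝ} (hR : 0 < R) (w : WaveJet d)
    (s : ℝ) (x : EuclideanSpace ℝ (Fin d)) :
    4 * (WaveJet.comb (1 / 2) (1 / 2) w (WaveJet.shift s w)).dens x 0
      ≤ (1 + η) * (w.dens x 0 + w.dens x s) + η⁻¹ * ((1 + R ^ 2) ^ 4 * w.localDens x s)
        + η⁻¹ * (w.dens x 0 - cutoff R x * w.dens x 0) := by
  set χ := cutoff R x
  have hχ0 : 0 ≤ χ := cutoff_nonneg R x
  have hχ1 : χ ≤ 1 := cutoff_le_one R x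
  have hη' : 0 < η⁻¹ := inv_pos.2 hη
  have hηη : η * η⁻¹ = 1 := mul_inv_cancel₀ hη.ne'
  have hab : ∀ a b : ℝ, 2 * (a * b) ≤ η * a ^ 2 + η⁻¹ * b ^ 2 := fun a b => by
    have : η⁻¹ * (η * a - b) ^ 2 = η * a ^ 2 + η⁻¹ * b ^ 2 - 2 * (a * b) := by
      linear_combination (η * a ^ 2 - 2 * a * b) * hηη
    nlinarith [mul_nonneg hη'.le (sq_nonneg (η * a - b))]
  have hsq : ∀ a b : ℝ, 4 * (1 / 2 * a + 1 / 2 * b) ^ 2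
      ≤ (1 + η) * (a ^ 2 + b ^ 2) + η⁻¹ * (χ * b ^ 2) + η⁻¹ * (a ^ 2 - χ * a ^ 2) := fun a b => by
    have h1 := mul_le_mul_of_nonneg_left (hab a b) hχ0
    have h2 := mul_le_mul_of_nonneg_left (hab b a) (sub_nonneg.2 hχ1)
    have h3 := mul_le_mul_of_nonneg_right hχ1 (mul_nonneg hη.le (sq_nonneg a))
    have h4 := mul_nonneg hχ0 (mul_nonneg hη.le (sq_nonneg b))
    nlinarith
  have hdens : 4 * (WaveJet.comb (1 / 2) (1 / 2) w (WaveJet.shift s w)).dens x 0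
      ≤ (1 + η) * (w.dens x 0 + w.dens x s) + η⁻¹ * (χ * w.dens x s)
        + η⁻¹ * (w.dens x 0 - χ * w.dens x 0) := by
    have h1 : ∑ i, 4 * (1 / 2 * w.ux i x 0 + 1 / 2 * w.ux i x s) ^ 2
        ≤ ∑ i, ((1 + η) * (w.ux i x 0 ^ 2 + w.ux i x s ^ 2) + η⁻¹ * (χ * w.ux i x s ^ 2)
          + η⁻¹ * (w.ux i x 0 ^ 2 - χ * w.ux i x 0 ^ 2)) :=
      Finset.sum_le_sum fun i _ => hsq _ _
    simp only [Finset.sum_add_distrib, Finset.sum_sub_distrib, ← Finset.mul_sum] at h1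
    have h2 := hsq (w.ut x 0) (w.ut x s)
    simp only [dens, gradSq, WaveJet.comb, WaveJet.shift, zero_add]
    linarith
  have hloc : χ * w.dens x s ≤ (1 + R ^ 2) ^ 4 * w.localDens x s := by
    rcases le_total R ‖x‖ with h | h
    · rw [show χ = 0 from cutoff_eq_zero hR h, zero_mul]
      exact mul_nonneg (by positivity) (w.localDens_nonneg x s)
    · have h1 := one_le_mul_weight_pow h
      have h2 := w.dens_nonneg x s
      unfold localDens
      have h3 := mul_le_mul_of_nonneg_right h1 (add_nonneg h2 (sq_nonneg (w.u x s)))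
      have h4 := mul_le_mul_of_nonneg_right hχ1 h2
      nlinarith [sq_nonneg (w.u x s)]
  have := mul_le_mul_of_nonneg_left hloc hη'.le
  linarith

/-- Averaging a solution with a late translate essentially halves the energy. -/
theorem FiniteEnergy.exists_average (hd : 3 ≤ d) (hw : w.FiniteEnergy K) {δ : ℝ} (hδ : 0 < δ) :
    ∃ s, 0 ≤ s ∧ (WaveJet.comb (1 / 2) (1 / 2) w (WaveJet.shift s w)).FiniteEnergy
      (K / 2 + δ) := by
  have hK := hw.bound_nonneg
  obtain ⟨η, hη, hηK⟩ : ∃ η : ℝ, 0 < η ∧ η * K ≤ δ :=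
    ⟨δ / (K + 1), by positivity, by
      rw [div_mul_eq_mul_div, div_le_iff₀ (by positivity)]
      nlinarith⟩
  have hη' : 0 < η⁻¹ := inv_pos.2 hη
  have hint0 := hw.integrable_dens 0 le_rfl
  obtain ⟨R, hR, hRδ⟩ : ∃ R : ℝ, 0 < R ∧
      η⁻¹ * ((∫ x, w.dens x 0) - ∫ x, cutoff R x * w.dens x 0) < δ := by
    have h := ((tendsto_integral_cutoff_mul hint0).const_sub (∫ x, w.dens x 0)).const_mul η⁻¹
    rw [sub_self, mul_zero] at h
    exact ((eventually_gt_atTop 0).and (h.eventually_lt_const hδ)).exists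
  obtain ⟨s, hs, hsδ⟩ : ∃ s : ℝ, 0 ≤ s ∧
      η⁻¹ * ((1 + R ^ 2) ^ 4 * ∫ x, w.localDens x s) < δ := by
    have h := ((hw.tendsto_integral_localDens hd).const_mul ((1 + R ^ 2) ^ 4)).const_mul η⁻¹
    rw [mul_zero, mul_zero] at h
    exact ((eventually_ge_atTop 0).and (h.eventually_lt_const hδ)).exists
  have hcomb := hw.comb (1 / 2) (1 / 2) (hw.shift hs)
  refine ⟨s, hs, hcomb.integrable_dens, fun t ht => ?_, hcomb.integrable_sq⟩
  refine (hcomb.integral_dens_mono le_rfl ht).trans ?_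
  have hints := hw.integrable_dens s hs
  have hintl := hw.integrable_localDens s hs
  have hintc : Integrable fun x => cutoff R x * w.dens x 0 :=
    integrable_cutoff_mul hR (by fun_prop)
  have h1 : Integrable fun x => (1 + η) * (w.dens x 0 + w.dens x s) :=
    (hint0.add hints).const_mul _
  have h2 : Integrable fun x => η⁻¹ * ((1 + R ^ 2) ^ 4 * w.localDens x s) :=
    (hintl.const_mul _).const_mul _
  have h3 : Integrable fun x => η⁻¹ * (w.dens x 0 - cutoff R x * w.dens x 0) :=
    (hint0.sub hintc).const_mul _
  have h := integral_mono ((hcomb.integrable_dens 0 le_rfl).const_mul 4) ((h1.add h2).add h3)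
    fun x => four_mul_dens_average_le hη hR w s x
  rw [integral_add' (h1.add h2) h3, integral_add' h1 h2, integral_const_mul, integral_const_mul,
    integral_const_mul, integral_const_mul, integral_const_mul, integral_add hint0 hints,
    integral_sub hint0 hintc] at h
  have h4 := hw.integral_dens_le 0 le_rfl
  have h5 := hw.integral_dens_le s hs
  have h6 : (1 + η) * ((∫ x, w.dens x 0) + ∫ x, w.dens x s) ≤ (1 + η) * (K + K) :=
    mul_le_mul_of_nonneg_left (add_le_add h4 h5) (by positivity)
  linarith

/-- A finite energy solution is approximated in energy by solutions at bounded `L²` distance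
from zero. -/
theorem FiniteEnergy.exists_approx (hd : 3 ≤ d) (hw : w.FiniteEnergy K) {ε : ℝ} (hε : 0 < ε) :
    ∃ v : WaveJet d, v.FiniteEnergy ε ∧ ∃ B : ℝ, ∀ t, 0 ≤ t →
      Integrable (fun x => (w.u x t - v.u x t) ^ 2) ∧
        ∫ x, (w.u x t - v.u x t) ^ 2 ≤ B := by
  have key : ∀ n : ℕ, ∃ v : WaveJet d, v.FiniteEnergy (K / 2 ^ n + ε / 2) ∧ ∃ B : ℝ, ∀ t, 0 ≤ t →
      Integrable (fun x => (w.u x t - v.u x t) ^ 2) ∧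
        ∫ x, (w.u x t - v.u x t) ^ 2 ≤ B := fun n => by
    induction n with
    | zero =>
      refine ⟨w, ⟨hw.integrable_dens, fun t ht => ?_, hw.integrable_sq⟩, 0, fun t _ => by simp⟩
      linarith [hw.integral_dens_le t ht]
    | succ n ih =>
      obtain ⟨v, hv, B, hB⟩ := ih
      obtain ⟨s, hs, hvs⟩ := hv.exists_average hd (show 0 < ε / 4 by positivity)
      refine ⟨_, by convert hvs using 1; rw [pow_succ]; field_simp; ring,
        2 * B + 1 / 2 * (exp s * ((K / 2 ^ n + ε / 2) * s)), fun t ht => ?_⟩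
      obtain ⟨h1, h2⟩ := hB t ht
      obtain ⟨h3, h4⟩ := integral_sq_sub_le hv.integrable_dens hv.integral_dens_le ht hs
      have hle : ∀ x, (w.u x t - (WaveJet.comb (1 / 2) (1 / 2) v (WaveJet.shift s v)).u x t) ^ 2
          ≤ 2 * (w.u x t - v.u x t) ^ 2 + 1 / 2 * (v.u x (t + s) - v.u x t) ^ 2 := fun x => by
        simp only [WaveJet.comb, WaveJet.shift]
        nlinarith [sq_nonneg ((w.u x t - v.u x t) + 1 / 2 * (v.u x (t + s) - v.u x t))]
      have h5 := (h1.const_mul 2).add (h3.const_mul (1 / 2))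
      have h6 := h5.mono' (f := fun x =>
        (w.u x t - (WaveJet.comb (1 / 2) (1 / 2) v (WaveJet.shift s v)).u x t) ^ 2)
        (by fun_prop) (Eventually.of_forall fun x => by
          rw [Real.norm_of_nonneg (sq_nonneg _)]
          exact hle x)
      refine ⟨h6, (integral_mono h6 h5 hle).trans ?_⟩
      rw [integral_add' (h1.const_mul 2) (h3.const_mul (1 / 2)), integral_const_mul,
        integral_const_mul]
      linarith
  have hlim : Tendsto (fun n : ℕ => K * (1 / 2 : ℝ) ^ n) atTop (nhds (K * 0)) :=
    (tendsto_pow_atTop_nhds_zero_of_lt_one (by norm_num) (by norm_num)).const_mul K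
  rw [mul_zero] at hlim
  obtain ⟨n, hn⟩ := (hlim.eventually_lt_const (half_pos hε)).exists
  obtain ⟨v, hv, hB⟩ := key n
  refine ⟨v, ⟨hv.integrable_dens, fun t ht => (hv.integral_dens_le t ht).trans ?_,
    hv.integrable_sq⟩, hB⟩
  rw [one_div, inv_pow, ← div_eq_mul_inv] at hn
  linarith

/-! ### Decay of the Hardy weighted norm -/

theorem FiniteEnergy.local_hardy (hd : 3 ≤ d) (hw : w.FiniteEnergy K) {t : ℝ} (ht : 0 ≤ t) :
    Integrable (fun x => (weight x ^ 4 * w.u x t) ^ 2 / ‖x‖ ^ 2) ∧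
      ∫ x, (weight x ^ 4 * w.u x t) ^ 2 / ‖x‖ ^ 2 ≤ 4 * (32 * ∫ x, w.localDens x t) := by
  have hloc := hw.integrable_localDens t ht
  set f' : Fin d → EuclideanSpace ℝ (Fin d) → ℝ := fun i x =>
    -(4 * x i * weight x ^ 6) * w.u x t + weight x ^ 4 * w.ux i x t with hf'
  have hle : ∀ x, ∑ i, f' i x ^ 2 ≤ 32 * w.localDens x t := fun x => by
    have h0 := (weight_pos x).le
    have h1 : ∑ i, f' i x ^ 2 ≤ ∑ i, (32 * weight x ^ 12 * w.u x t ^ 2 * x i ^ 2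
        + 2 * weight x ^ 8 * w.ux i x t ^ 2) := Finset.sum_le_sum fun i _ => by
      simp only [hf']
      nlinarith [sq_nonneg (4 * x i * weight x ^ 6 * w.u x t + weight x ^ 4 * w.ux i x t)]
    rw [Finset.sum_add_distrib, ← Finset.mul_sum, ← Finset.mul_sum,
      ← EuclideanSpace.real_norm_sq_eq] at h1
    change _ ≤ _ + 2 * weight x ^ 8 * w.gradSq x t at h1
    have h2 : weight x ^ 12 * ‖x‖ ^ 2 = weight x ^ 10 - weight x ^ 12 := by
      linear_combination weight x ^ 10 * weight_sq_mul x
    have h3 : weight x ^ 10 ≤ weight x ^ 8 :=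
      pow_le_pow_of_le_one h0 (weight_le_one x) (by norm_num)
    have h4 : weight x ^ 12 * ‖x‖ ^ 2 ≤ weight x ^ 8 := by
      have : 0 ≤ weight x ^ 12 := by positivity
      linarith
    have h5 := mul_le_mul_of_nonneg_right h4 (sq_nonneg (w.u x t))
    have h6 := mul_nonneg (pow_nonneg h0 8) (w.gradSq_nonneg x t)
    have h7 := mul_nonneg (pow_nonneg h0 8) (sq_nonneg (w.ut x t))
    unfold localDens dens
    nlinarith
  have hint' : Integrable fun x => ∑ i, f' i x ^ 2 :=
    (hloc.const_mul 32).mono' (by simp only [hf']; fun_prop) (Eventually.of_forall fun x => by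
      rw [Real.norm_of_nonneg (Finset.sum_nonneg fun i _ => sq_nonneg _)]
      exact hle x)
  obtain ⟨h1, h2⟩ := FreeWave.hardy hd (f := fun x => weight x ^ 4 * w.u x t) (f' := f')
    (by fun_prop) (fun i => by simp only [hf']; fun_prop)
    (fun i x => by
      have h := (hasPartial_weight_pow i x 4).fun_mul (w.partial_u i x t)
      refine h.congr_deriv ?_
      simp [hf'])
    ((hw.integrable_sq t ht).mono' (by fun_prop) (Eventually.of_forall fun x => by
      rw [Real.norm_of_nonneg (by positivity), mul_pow]
      refine mul_le_mul_of_nonneg_left (mul_le_of_le_one_left (sq_nonneg _) ?_) (sq_nonneg _)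
      exact pow_le_one₀ (pow_nonneg (weight_pos x).le 4)
        (pow_le_one₀ (weight_pos x).le (weight_le_one x))))
    hint'
  refine ⟨h1, h2.trans (mul_le_mul_of_nonneg_left ?_ (by norm_num))⟩
  rw [← integral_const_mul]
  exact integral_mono hint' (hloc.const_mul 32) hle

theorem sq_div_norm_sq_le {R : ℝ} (hR : 0 < R) (a : ℝ) (x : EuclideanSpace ℝ (Fin d)) :
    a ^ 2 / ‖x‖ ^ 2
      ≤ (1 + R ^ 2) ^ 4 * ((weight x ^ 4 * a) ^ 2 / ‖x‖ ^ 2) + (R ^ 2)⁻¹ * a ^ 2 := by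
  rcases le_total R ‖x‖ with h | h
  · have h1 : a ^ 2 / ‖x‖ ^ 2 ≤ (R ^ 2)⁻¹ * a ^ 2 := by
      rw [div_eq_inv_mul]
      gcongr
    have h2 : 0 ≤ (1 + R ^ 2) ^ 4 * ((weight x ^ 4 * a) ^ 2 / ‖x‖ ^ 2) := by positivity
    linarith
  · have h1 := mul_le_mul_of_nonneg_right (one_le_mul_weight_pow h)
      (show 0 ≤ a ^ 2 / ‖x‖ ^ 2 by positivity)
    have h2 : 0 ≤ (R ^ 2)⁻¹ * a ^ 2 := by positivity
    have h3 : (1 + R ^ 2) ^ 4 * ((weight x ^ 4 * a) ^ 2 / ‖x‖ ^ 2)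
        = (1 + R ^ 2) ^ 4 * weight x ^ 8 * (a ^ 2 / ‖x‖ ^ 2) := by ring
    linarith

/-- The Hardy weighted norm of a finite energy solution tends to zero. -/
theorem FiniteEnergy.tendsto_integral_sq_div (hd : 3 ≤ d) (hw : w.FiniteEnergy K) :
    Tendsto (fun t => ∫ x, w.u x t ^ 2 / ‖x‖ ^ 2) atTop (nhds 0) := by
  refine tendsto_order.2 ⟨fun a ha => Eventually.of_forall fun t =>
    ha.trans_le (integral_nonneg fun x => by positivity), fun ε hε => ?_⟩
  obtain ⟨v, hv, B, hB⟩ := hw.exists_approx hd (show 0 < ε / 24 by positivity)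
  set z := WaveJet.comb 1 (-1) w v with hz
  have hzu : ∀ x t, z.u x t = w.u x t - v.u x t := fun x t => by
    simp only [hz, WaveJet.comb]
    ring
  have hzE := hw.comb 1 (-1) hv
  obtain ⟨R, hR, hRB⟩ : ∃ R : ℝ, 0 < R ∧ 2 * (B / R ^ 2) < ε / 3 := by
    have h := (Tendsto.const_div_atTop (tendsto_pow_atTop (α := ℝ) two_ne_zero) B).const_mul 2
    rw [mul_zero] at h
    exact ((eventually_gt_atTop 0).and (h.eventually_lt_const (by positivity))).exists
  have hlim := ((((hzE.tendsto_integral_localDens hd).const_mul 32).const_mul 4).const_mul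
    ((1 + R ^ 2) ^ 4)).const_mul 2
  simp only [mul_zero] at hlim
  filter_upwards [hlim.eventually_lt_const (show 0 < ε / 3 by positivity),
    eventually_ge_atTop 0] with t hloc ht
  obtain ⟨h1, h2⟩ := hzE.local_hardy hd ht
  obtain ⟨h3, h4⟩ := hv.hardy t hd ht
  have h5 := hv.integral_dens_le t ht
  obtain ⟨h6, h7⟩ := hB t ht
  have hA : Integrable fun x =>
      2 * ((1 + R ^ 2) ^ 4 * ((weight x ^ 4 * z.u x t) ^ 2 / ‖x‖ ^ 2)) :=
    (h1.const_mul _).const_mul _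
  have hB' : Integrable fun x => 2 * ((R ^ 2)⁻¹ * (w.u x t - v.u x t) ^ 2) :=
    (h6.const_mul _).const_mul _
  have hC : Integrable fun x => 2 * (v.u x t ^ 2 / ‖x‖ ^ 2) := h3.const_mul _
  have hle := integral_mono (hw.hardy t hd ht).1 ((hA.add hB').add hC) fun x => by
    have e1 := sq_div_norm_sq_le hR (w.u x t - v.u x t) x
    have e2 : w.u x t ^ 2 / ‖x‖ ^ 2
        ≤ (2 * (w.u x t - v.u x t) ^ 2 + 2 * v.u x t ^ 2) / ‖x‖ ^ 2 :=
      div_le_div_of_nonneg_right (by nlinarith [sq_nonneg (w.u x t - 2 * v.u x t)])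
        (by positivity)
    rw [add_div, mul_div_assoc, mul_div_assoc] at e2
    simp only [Pi.add_apply, hzu]
    linarith
  rw [integral_add' (hA.add hB') hC, integral_add' hA hB', integral_const_mul, integral_const_mul,
    integral_const_mul, integral_const_mul, integral_const_mul] at hle
  have e1 := mul_le_mul_of_nonneg_left h2 (show 0 ≤ (1 + R ^ 2) ^ 4 by positivity)
  have e2 := mul_le_mul_of_nonneg_left h7 (show 0 ≤ (R ^ 2)⁻¹ by positivity)
  rw [div_eq_inv_mul] at hRB
  linarith

end WaveJet

/-! ### From twice differentiable solutions to jets -/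

theorem hasDerivAt_comp_curve {V : Type*} [NormedAddCommGroup V] [NormedSpace ℝ V] {f : V → ℝ}
    (hf : ContDiff ℝ 2 f) {γ : ℝ → V} {γ' : V} {s : ℝ} (hγ : HasDerivAt γ γ' s) :
    HasDerivAt (fun τ => f (γ τ)) (fderiv ℝ f (γ s) γ') s :=
  (hf.differentiable (by norm_num) (γ s)).hasFDerivAt.comp_hasDerivAt s hγ

theorem hasDerivAt_fderiv_comp_curve {V : Type*} [NormedAddCommGroup V] [NormedSpace ℝ V]
    {f : V → ℝ} (hf : ContDiff ℝ 2 f) (b : V) {γ : ℝ → V} {γ' : V} {s : ℝ}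
    (hγ : HasDerivAt γ γ' s) :
    HasDerivAt (fun τ => fderiv ℝ f (γ τ) b) (fderiv ℝ (fderiv ℝ f) (γ s) γ' b) s := by
  have h1 : Differentiable ℝ (fderiv ℝ f) :=
    (hf.fderiv_right (m := 1) (by norm_num)).differentiable (by norm_num)
  have h2 := ((h1 (γ s)).hasFDerivAt.comp_hasDerivAt s hγ).clm_apply (hasDerivAt_const s b)
  simpa using h2

theorem fderiv_fderiv_apply_comm {V : Type*} [NormedAddCommGroup V] [NormedSpace ℝ V]
    {f : V → ℝ} (hf : ContDiff ℝ 2 f) (p a b : V) :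
    fderiv ℝ (fderiv ℝ f) p a b = fderiv ℝ (fderiv ℝ f) p b a :=
  (hf.contDiffAt.isSymmSndFDerivAt (by simp)) a b

theorem continuous_fderiv_fderiv_apply {V : Type*} [NormedAddCommGroup V] [NormedSpace ℝ V]
    {f : V → ℝ} (hf : ContDiff ℝ 2 f) (a b : V) :
    Continuous fun p => fderiv ℝ (fderiv ℝ f) p a b :=
  (((hf.fderiv_right (m := 1) (by norm_num)).continuous_fderiv (by norm_num)).clm_apply
    continuous_const).clm_apply continuous_const

theorem hasDerivAt_prodMk_time (x : EuclideanSpace ℝ (Fin d)) (t : ℝ) :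
    HasDerivAt (fun s : ℝ => (x, s)) ((0 : EuclideanSpace ℝ (Fin d)), (1 : ℝ)) t :=
  (hasDerivAt_const t x).prodMk (hasDerivAt_id t)

theorem hasDerivAt_prodMk_space (x b : EuclideanSpace ℝ (Fin d)) (t : ℝ) :
    HasDerivAt (fun s : ℝ => (x + s • b, t)) (b, (0 : ℝ)) 0 := by
  have h := ((hasDerivAt_id (0 : ℝ)).smul_const b).const_add x
  simpa using h.prodMk (hasDerivAt_const (0 : ℝ) t)

theorem hasFDerivAt_comp_slice {V : Type*} [NormedAddCommGroup V] [NormedSpace ℝ V]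
    {f : EuclideanSpace ℝ (Fin d) × ℝ → V} {x : EuclideanSpace ℝ (Fin d)} {t : ℝ}
    (hf : DifferentiableAt ℝ f (x, t)) :
    HasFDerivAt (fun y => f (y, t)) ((fderiv ℝ f (x, t)).comp
      (ContinuousLinearMap.inl ℝ (EuclideanSpace ℝ (Fin d)) ℝ)) x := by
  have h : HasFDerivAt (fun y : EuclideanSpace ℝ (Fin d) => (y, t))
      (ContinuousLinearMap.inl ℝ (EuclideanSpace ℝ (Fin d)) ℝ) x := hasFDerivAt_prodMk_left x t
  exact hf.hasFDerivAt.comp (f := fun y : EuclideanSpace ℝ (Fin d) => (y, t)) x h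

theorem hasFDerivAt_slice {u : EuclideanSpace ℝ (Fin d) → ℝ → ℝ}
    (hu : ContDiff ℝ 2 (Function.uncurry u)) (x : EuclideanSpace ℝ (Fin d)) (t : ℝ) :
    HasFDerivAt (fun y => u y t) ((fderiv ℝ (Function.uncurry u) (x, t)).comp
      (ContinuousLinearMap.inl ℝ (EuclideanSpace ℝ (Fin d)) ℝ)) x :=
  hasFDerivAt_comp_slice (hu.differentiable (by norm_num) (x, t))

theorem norm_gradient_sq {f : EuclideanSpace ℝ (Fin d) → ℝ} (x : EuclideanSpace ℝ (Fin d)) :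
    ‖gradient f x‖ ^ 2 = ∑ i, fderiv ℝ f x (EuclideanSpace.single i 1) ^ 2 := by
  rw [EuclideanSpace.real_norm_sq_eq]
  refine Finset.sum_congr rfl fun i _ => ?_
  rw [← toDual_gradient, InnerProductSpace.toDual_apply_apply, EuclideanSpace.inner_single_right]
  simp

/-- The jet of a twice continuously differentiable solution of the wave equation. -/
noncomputable def jet (u : EuclideanSpace ℝ (Fin d) → ℝ → ℝ)
    (hu : ContDiff ℝ 2 (Function.uncurry u))
    (hwave : ∀ x t, fderiv ℝ (fderiv ℝ (Function.uncurry u)) (x, t) (0, 1) (0, 1)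
      = ∑ i, fderiv ℝ (fderiv ℝ (Function.uncurry u)) (x, t)
        (EuclideanSpace.single i 1, 0) (EuclideanSpace.single i 1, 0)) : WaveJet d where
  u := u
  ut x t := fderiv ℝ (Function.uncurry u) (x, t) (0, 1)
  ux i x t := fderiv ℝ (Function.uncurry u) (x, t) (EuclideanSpace.single i 1, 0)
  uxt i x t := fderiv ℝ (fderiv ℝ (Function.uncurry u)) (x, t) (0, 1)
    (EuclideanSpace.single i 1, 0)
  uxx i j x t := fderiv ℝ (fderiv ℝ (Function.uncurry u)) (x, t) (EuclideanSpace.single j 1, 0)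
    (EuclideanSpace.single i 1, 0)
  cont_u := hu.continuous
  cont_ut := (hu.continuous_fderiv (by norm_num)).clm_apply continuous_const
  cont_ux i := (hu.continuous_fderiv (by norm_num)).clm_apply continuous_const
  cont_uxt i := continuous_fderiv_fderiv_apply hu _ _
  cont_uxx i j := continuous_fderiv_fderiv_apply hu _ _
  deriv_u x t := hasDerivAt_comp_curve hu (hasDerivAt_prodMk_time x t)
  deriv_ut x t := by
    rw [← hwave]
    exact hasDerivAt_fderiv_comp_curve hu _ (hasDerivAt_prodMk_time x t)
  deriv_ux i x t := hasDerivAt_fderiv_comp_curve hu _ (hasDerivAt_prodMk_time x t)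
  partial_u i x t := by
    simpa using hasDerivAt_comp_curve hu (hasDerivAt_prodMk_space x (EuclideanSpace.single i 1) t)
  partial_ut i x t := by
    rw [fderiv_fderiv_apply_comm hu]
    simpa using hasDerivAt_fderiv_comp_curve hu (0, 1)
      (hasDerivAt_prodMk_space x (EuclideanSpace.single i 1) t)
  partial_ux i j x t := by
    simpa using hasDerivAt_fderiv_comp_curve hu (EuclideanSpace.single i 1, 0)
      (hasDerivAt_prodMk_space x (EuclideanSpace.single j 1) t)
  symm i j x t := fderiv_fderiv_apply_comm hu _ _ _

theorem wave_equation_uncurry {u : EuclideanSpace ℝ (Fin d) → ℝ → ℝ}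
    (hu : ContDiff ℝ 2 (Function.uncurry u))
    (hwave : ∀ (x : EuclideanSpace ℝ (Fin d)) (t : ℝ),
      deriv (fun s => deriv (fun s' => u x s') s) t
        - ∑ i : Fin d, fderiv ℝ (fun y => fderiv ℝ (fun z => u z t) y
            (EuclideanSpace.single i 1)) x (EuclideanSpace.single i 1) = 0)
    (x : EuclideanSpace ℝ (Fin d)) (t : ℝ) :
    fderiv ℝ (fderiv ℝ (Function.uncurry u)) (x, t) (0, 1) (0, 1)
      = ∑ i, fderiv ℝ (fderiv ℝ (Function.uncurry u)) (x, t)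
        (EuclideanSpace.single i 1, 0) (EuclideanSpace.single i 1, 0) := by
  have h1 : ∀ s, deriv (fun s' => u x s') s = fderiv ℝ (Function.uncurry u) (x, s) (0, 1) :=
    fun s => (hasDerivAt_comp_curve hu (hasDerivAt_prodMk_time x s)).deriv
  have h2 := (hasDerivAt_fderiv_comp_curve hu (0, 1) (hasDerivAt_prodMk_time x t)).deriv
  have h3 := hwave x t
  simp only [h1, h2] at h3
  rw [sub_eq_zero.1 h3]
  refine Finset.sum_congr rfl fun i _ => ?_
  have h4 : ∀ y, fderiv ℝ (fun z => u z t) y (EuclideanSpace.single i 1)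
      = fderiv ℝ (Function.uncurry u) (y, t) (EuclideanSpace.single i 1, 0) := fun y => by
    rw [(hasFDerivAt_slice hu y t).fderiv]
    simp
  simp only [h4]
  have h5 : Differentiable ℝ (fderiv ℝ (Function.uncurry u)) :=
    (hu.fderiv_right (m := 1) (by norm_num)).differentiable (by norm_num)
  have h6 := ((hasFDerivAt_comp_slice (h5 (x, t))).clm_apply
    (hasFDerivAt_const (EuclideanSpace.single i (1 : ℝ), (0 : ℝ)) x)).fderiv
  rw [h6]
  simp

end FreeWave

/-- For a finite-energy free wave on `ℝ^d`, `d ≥ 3`, the Hardy-weighted quantity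
`∫ |u(x,t)|²/|x|² dx` tends to `0` as `t → +∞`. -/
theorem hardy_weighted_decay_free_wave (d : ℕ) (hd : 3 ≤ d)
    (u : EuclideanSpace ℝ (Fin d) → ℝ → ℝ)
    (hu : ContDiff ℝ 2 (Function.uncurry u))
    (hwave : ∀ (x : EuclideanSpace ℝ (Fin d)) (t : ℝ),
      deriv (fun s => deriv (fun s' => u x s') s) t
        - ∑ i : Fin d, fderiv ℝ (fun y => fderiv ℝ (fun z => u z t) y
            (EuclideanSpace.single i 1)) x (EuclideanSpace.single i 1) = 0)
    (hfinite : ∀ t : ℝ, Integrable (fun x : EuclideanSpace ℝ (Fin d) =>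
      ‖gradient (fun y => u y t) x‖ ^ 2 + (deriv (u x) t) ^ 2))
    (hconserve : ∀ t : ℝ,
      (∫ x : EuclideanSpace ℝ (Fin d),
        (‖gradient (fun y => u y t) x‖ ^ 2 + (deriv (u x) t) ^ 2))
      = ∫ x : EuclideanSpace ℝ (Fin d),
        (‖gradient (fun y => u y 0) x‖ ^ 2 + (deriv (u x) 0) ^ 2)) :
    Tendsto (fun t : ℝ => ∫ x : EuclideanSpace ℝ (Fin d), (u x t) ^ 2 / ‖x‖ ^ 2)
      atTop (nhds 0) := by
  by_cases hex : ∃ t₀, Integrable fun x => u x t₀ ^ 2 / ‖x‖ ^ 2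
  · obtain ⟨t₀, ht₀⟩ := hex
    set w := FreeWave.jet u hu (FreeWave.wave_equation_uncurry hu hwave) with hw
    have hdens : ∀ t, (fun x => ‖gradient (fun y => u y t) x‖ ^ 2 + (deriv (u x) t) ^ 2)
        = fun x => w.dens x t := fun t => by
      funext x
      rw [FreeWave.norm_gradient_sq, (FreeWave.hasFDerivAt_slice hu x t).fderiv,
        show deriv (u x) t = w.ut x t from (w.deriv_u x t).deriv]
      simp [FreeWave.WaveJet.dens, FreeWave.WaveJet.gradSq, hw, FreeWave.jet]
    simp only [hdens] at hfinite hconserve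
    have hE : (w.shift t₀).FiniteEnergy (∫ x, w.dens x 0) :=
      FreeWave.WaveJet.finiteEnergy_of_integrable_sq (fun t _ => hfinite (t + t₀))
        (fun t _ => (hconserve (t + t₀)).le) (ht₀.mono' (by fun_prop) (by
          filter_upwards [FreeWave.WaveJet.ae_ne_zero hd] with x hx
          rw [Real.norm_of_nonneg (by positivity)]
          simpa [FreeWave.WaveJet.shift, hw, FreeWave.jet] using
            FreeWave.WaveJet.weight_sq_mul_le_div hx (u x t₀)))
    have h := (hE.tendsto_integral_sq_div hd).comp
      (tendsto_atTop_add_const_right atTop (-t₀) tendsto_id)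
    refine h.congr fun t => ?_
    simp [FreeWave.WaveJet.shift, hw, FreeWave.jet]
  · push Not at hex
    simp only [fun t => integral_undef (hex t)]
    exact tendsto_const_nhds
end
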